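/- arXiv:1304.1015 — 3 statements merged into one kernel-verified Lean document; each statement's English description precedes it below -/
import Mathlib

section
/- Let 𝔊 be a homothecy invariant collection of open rectangles (not necessarily axis-parallel) in ℝⁿ and let μ be a nonzero locally finite nonnegative Borel measure on ℝⁿ which is doubling with respect to 𝔊. Then the following are equivalent: (i) there exist γ ∈ (0,1) and c > 0 such that μ({x ∈ ℝⁿ : M_{𝔊,μ}(1_E)(x) > γ}) ≤ c·μ(E) for every Borel set E ⊆ ℝⁿ; (ii) there exists p₀ > 1 such that M_{𝔊,μ} is bounded on L^p(μ) for every p > p₀. -/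
open MeasureTheory Set Filter
open scoped ENNReal Topology Pointwise

noncomputable section

/-- The maximal operator `M_{𝔅,μ}` associated to a measure `μ` and a collection `𝔅`
of subsets of `ℝⁿ`, applied to `f` at the point `x` (valued in `ℝ≥0∞`; it equals `0`
outside the union of `𝔅`). -/
noncomputable def maxOp {n : ℕ} (μ : Measure (EuclideanSpace ℝ (Fin n)))
    (𝔅 : Set (Set (EuclideanSpace ℝ (Fin n))))
    (f : EuclideanSpace ℝ (Fin n) → ℝ) (x : EuclideanSpace ℝ (Fin n)) : ℝ≥0∞ :=
  ⨆ (B : Set (EuclideanSpace ℝ (Fin n))) (_ : B ∈ 𝔅) (_ : x ∈ B) (_ : 0 < μ B),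
    (∫⁻ y in B, ENNReal.ofReal |f y| ∂μ) / μ B

/-- A collection of sets is homothecy invariant if it is closed under translations and
positive dilations. -/
def HomothecyInvariant {n : ℕ} (𝔅 : Set (Set (EuclideanSpace ℝ (Fin n)))) : Prop :=
  ∀ B ∈ 𝔅, (∀ y : EuclideanSpace ℝ (Fin n), y +ᵥ B ∈ 𝔅) ∧ (∀ s : ℝ, 0 < s → s • B ∈ 𝔅)

/-- `μ` is doubling with respect to the collection `𝔅`, with constant `Δ`: whenever
`B ∈ 𝔅` and a translate of the dilate `2·B` contains `B`, its measure is at most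
`Δ·μ(B)`. -/
def DoublingWrt {n : ℕ} (μ : Measure (EuclideanSpace ℝ (Fin n)))
    (𝔅 : Set (Set (EuclideanSpace ℝ (Fin n)))) (Δ : ℝ) : Prop :=
  ∀ B ∈ 𝔅, ∀ σ : EuclideanSpace ℝ (Fin n),
    B ⊆ σ +ᵥ (2 : ℝ) • B → μ (σ +ᵥ (2 : ℝ) • B) ≤ ENNReal.ofReal Δ * μ B

/-- A member of a basis of convex sets: nonempty, bounded, open and convex. -/
def IsConvexBasisSet {n : ℕ} (B : Set (EuclideanSpace ℝ (Fin n))) : Prop :=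
  B.Nonempty ∧ Bornology.IsBounded B ∧ IsOpen B ∧ Convex ℝ B

/-- An open axis-parallel rectangle in `ℝⁿ`. -/
def IsAxisRect {n : ℕ} (R : Set (EuclideanSpace ℝ (Fin n))) : Prop :=
  ∃ a b : Fin n → ℝ, (∀ i, a i < b i) ∧ R = {x | ∀ i, x i ∈ Set.Ioo (a i) (b i)}

/-- An open rectangle (possibly rotated rectangular parallelepiped) in `ℝⁿ`:
the image of an open axis-parallel rectangle under a rigid motion. -/
def IsRect {n : ℕ} (R : Set (EuclideanSpace ℝ (Fin n))) : Prop :=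
  ∃ (f : EuclideanSpace ℝ (Fin n) ≃ᵢ EuclideanSpace ℝ (Fin n))
    (S : Set (EuclideanSpace ℝ (Fin n))), IsAxisRect S ∧ R = f '' S

/-- An open axis-parallel cube in `ℝⁿ`. -/
def IsAxisCube {n : ℕ} (C : Set (EuclideanSpace ℝ (Fin n))) : Prop :=
  ∃ (a : Fin n → ℝ) (s : ℝ), 0 < s ∧ C = {x | ∀ i, x i ∈ Set.Ioo (a i) (a i + s)}

/-- `M_{𝔅,μ}` is bounded on `L^p(ν)`. -/
def BoundedOnLp {n : ℕ} (μ ν : Measure (EuclideanSpace ℝ (Fin n)))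
    (𝔅 : Set (Set (EuclideanSpace ℝ (Fin n)))) (p : ℝ) : Prop :=
  ∃ C : ℝ≥0∞, C ≠ ⊤ ∧ ∀ f : EuclideanSpace ℝ (Fin n) → ℝ, Measurable f →
    ∫⁻ x, maxOp μ 𝔅 f x ^ p ∂ν ≤ C * ∫⁻ x, ENNReal.ofReal |f x| ^ p ∂ν

/-- The Tauberian condition for `M_{𝔅,μ}` at level `γ`, with constant `c`, with respect
to the measure `ν`. -/
def TauberianCond {n : ℕ} (μ ν : Measure (EuclideanSpace ℝ (Fin n)))
    (𝔅 : Set (Set (EuclideanSpace ℝ (Fin n)))) (γ c : ℝ) : Prop :=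
  ∀ E : Set (EuclideanSpace ℝ (Fin n)), MeasurableSet E →
    ν {x | ENNReal.ofReal γ < maxOp μ 𝔅 (E.indicator 1) x} ≤ ENNReal.ofReal c * ν E

/-- The standard open dyadic box of scale `2^k` and position `m` in `ℝⁿ`. -/
def stdBox (n : ℕ) (k : ℤ) (m : Fin n → ℤ) : Set (Fin n → ℝ) :=
  {x | ∀ i, (m i : ℝ) * 2 ^ k < x i ∧ x i < ((m i : ℝ) + 1) * 2 ^ k}

/-- A parametrization of a rectangular grid: a rigid motion composed with a positive
diagonal scaling. The image of the standard unit box under such a map is a rectangle. -/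
def IsRectParam {n : ℕ} (T : (Fin n → ℝ) → EuclideanSpace ℝ (Fin n)) : Prop :=
  ∃ (f : EuclideanSpace ℝ (Fin n) ≃ᵢ EuclideanSpace ℝ (Fin n)) (l : Fin n → ℝ),
    (∀ i, 0 < l i) ∧
    ∀ x, T x = f ((WithLp.equiv 2 (Fin n → ℝ)).symm (fun i => l i * x i))

/-- The dyadic mesh generated by a rectangle parametrized by `T`. -/
def dyadicMesh {n : ℕ} (T : (Fin n → ℝ) → EuclideanSpace ℝ (Fin n)) :
    Set (Set (EuclideanSpace ℝ (Fin n))) :=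
  {S | ∃ (k : ℤ) (m : Fin n → ℤ), S = T '' stdBox n k m}

/-- `S` is a dyadic descendant of the rectangle `R`, `s` generations inside `R`. -/
def DyadicDescendant {n : ℕ} (R S : Set (EuclideanSpace ℝ (Fin n))) (s : ℕ) : Prop :=
  ∃ T : (Fin n → ℝ) → EuclideanSpace ℝ (Fin n), IsRectParam T ∧
    T '' stdBox n 0 0 = R ∧
    ∃ m : Fin n → ℤ, (∀ i, 0 ≤ m i ∧ m i < 2 ^ s) ∧ S = T '' stdBox n (-(s : ℤ)) m

/-- The family of all homothetic copies (translates and positive dilates) of `R₀`. -/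
def homCopies {n : ℕ} (R₀ : Set (EuclideanSpace ℝ (Fin n))) :
    Set (Set (EuclideanSpace ℝ (Fin n))) :=
  {S | ∃ (y : EuclideanSpace ℝ (Fin n)) (s : ℝ), 0 < s ∧ S = y +ᵥ s • R₀}

/-- Iterated halo sets `H_β^k(E)`: `H_β^0(E) = E` and
`H_β^{k+1}(E) = {x : M_{𝔊,μ}(1_{H_β^k(E)})(x) ≥ β}`. -/
def Hiter {n : ℕ} (μ : Measure (EuclideanSpace ℝ (Fin n)))
    (𝔊 : Set (Set (EuclideanSpace ℝ (Fin n)))) (β : ℝ)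
    (E : Set (EuclideanSpace ℝ (Fin n))) : ℕ → Set (EuclideanSpace ℝ (Fin n))
  | 0 => E
  | k + 1 => {x | ENNReal.ofReal β ≤ maxOp μ 𝔊 ((Hiter μ 𝔊 β E k).indicator 1) x}

/-- The Muckenhoupt `A_{p,𝔅}` condition for a weight `w` (with respect to Lebesgue
measure); here `1 - p/(p-1) = 1 - p'`. -/
def MuckenhouptAp {n : ℕ} (𝔅 : Set (Set (EuclideanSpace ℝ (Fin n))))
    (w : EuclideanSpace ℝ (Fin n) → ℝ) (p : ℝ) : Prop :=
  ∃ C : ℝ≥0∞, C ≠ ⊤ ∧ ∀ B ∈ 𝔅,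
    ((∫⁻ x in B, ENNReal.ofReal (w x) ∂volume) / volume B) *
      (((∫⁻ x in B, ENNReal.ofReal (w x) ^ (1 - p / (p - 1)) ∂volume) / volume B) ^ (p - 1))
      ≤ C

/-- `𝔅` is a Muckenhoupt basis: for every `1 < p < ∞` and every weight `w ∈ A_{p,𝔅}`,
the maximal operator `M_𝔅` is bounded on `L^p(w)`. -/
def MuckenhouptBasis {n : ℕ} (𝔅 : Set (Set (EuclideanSpace ℝ (Fin n)))) : Prop :=
  ∀ p : ℝ, 1 < p → ∀ w : EuclideanSpace ℝ (Fin n) → ℝ, (∀ x, 0 ≤ w x) →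
    LocallyIntegrable w volume → MuckenhouptAp 𝔅 w p →
    BoundedOnLp volume (volume.withDensity fun x => ENNReal.ofReal (w x)) 𝔅 p

end

section LocalPart

set_option linter.unusedSectionVars false

variable {F : Type*} [NormedAddCommGroup F] [NormedSpace ℝ F] [ProperSpace F]
  [MeasurableSpace F] [BorelSpace F]

theorem aux_ball_fin (ν : Measure F) [IsLocallyFiniteMeasure ν] (x : F) (r : ℝ) :
    ν (Metric.ball x r) ≠ ⊤ := measure_ball_lt_top.ne

theorem aux_cball_fin (ν : Measure F) [IsLocallyFiniteMeasure ν] (x : F) (r : ℝ) :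
    ν (Metric.closedBall x r) ≠ ⊤ := measure_closedBall_lt_top.ne

theorem aux_unif (ν : Measure F) [IsLocallyFiniteMeasure ν] (D : ℝ)
    (hD : ∀ x y : F, ∀ r : ℝ, 0 < r → Metric.ball y r ⊆ Metric.ball x (2 * r) →
      ν.real (Metric.ball x (2 * r)) ≤ D * ν.real (Metric.ball y r)) (hD0 : 0 ≤ D) :
    IsUnifLocDoublingMeasure ν := by
  refine ⟨⟨⟨D * D, mul_nonneg hD0 hD0⟩, ?_⟩⟩
  filter_upwards [self_mem_nhdsWithin] with ε hε x
  have hε : 0 < ε := hε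
  have h1 := hD x x ε hε (Metric.ball_subset_ball (by linarith))
  have h2 := hD x x (2 * ε) (by linarith) (Metric.ball_subset_ball (by linarith))
  have h3 : ν.real (Metric.closedBall x (2 * ε)) ≤ ν.real (Metric.ball x (2 * (2 * ε))) :=
    measureReal_mono (Metric.closedBall_subset_ball (by linarith)) (aux_ball_fin _ _ _)
  have h4 : ν.real (Metric.ball x ε) ≤ ν.real (Metric.closedBall x ε) :=
    measureReal_mono Metric.ball_subset_closedBall (aux_cball_fin _ _ _)
  have h5 : ν.real (Metric.closedBall x (2 * ε)) ≤ D * D * ν.real (Metric.closedBall x ε) := by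
    nlinarith [mul_le_mul_of_nonneg_left h1 hD0, mul_le_mul_of_nonneg_left h4 (mul_nonneg hD0 hD0)]
  have h6 := ENNReal.ofReal_le_ofReal h5
  rw [ENNReal.ofReal_mul (mul_nonneg hD0 hD0), ofReal_measureReal (aux_cball_fin _ _ _),
    ofReal_measureReal (aux_cball_fin _ _ _)] at h6
  convert h6 using 2
  exact (ENNReal.ofReal_eq_coe_nnreal _).symm

theorem aux_sphere (ν : Measure F) [IsLocallyFiniteMeasure ν] (D : ℝ)
    (hD : ∀ x y : F, ∀ r : ℝ, 0 < r → Metric.ball y r ⊆ Metric.ball x (2 * r) →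
      ν.real (Metric.ball x (2 * r)) ≤ D * ν.real (Metric.ball y r)) (hD0 : 0 < D)
    (hpos : ∀ x : F, ∀ r : ℝ, 0 < r → 0 < ν.real (Metric.ball x r))
    (c : F) (r : ℝ) (hr : 0 < r) : ν (Metric.sphere c r) = 0 := by
  have := aux_unif ν D hD hD0.le
  have key := IsUnifLocDoublingMeasure.ae_tendsto_measure_inter_div ν (Metric.sphere c r) 1
  have hno : ∀ᵐ x ∂ν.restrict (Metric.sphere c r), False := by
    filter_upwards [key, ae_restrict_mem Metric.isClosed_sphere.measurableSet] with x hx hxs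
    have h := hx (l := 𝓝[>] (0 : ℝ)) (fun _ => x) (fun ε => ε) tendsto_id (by
      filter_upwards [self_mem_nhdsWithin] with ε hε
      have : (0 : ℝ) < ε := hε
      simp [this.le])
    have hxc : dist x c = r := hxs
    have hle : ∀ᶠ ε in 𝓝[>] (0 : ℝ), ν (Metric.sphere c r ∩ Metric.closedBall x ε) /
        ν (Metric.closedBall x ε) ≤ ENNReal.ofReal (1 - 1 / (D * D)) := by
      filter_upwards [self_mem_nhdsWithin, Ioo_mem_nhdsGT hr] with ε hε hεr
      have hε : 0 < ε := hε
      have hεr : ε < r := hεr.2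
      set y : F := x + (ε / (2 * r)) • (c - x) with hy
      have hyx : dist y x = ε / 2 := by
        rw [hy, dist_eq_norm, add_sub_cancel_left, norm_smul, ← dist_eq_norm, dist_comm, hxc,
          Real.norm_of_nonneg (by positivity)]
        field_simp
      have hyc : dist y c = r - ε / 2 := by
        have : y - c = (1 - ε / (2 * r)) • (x - c) := by rw [hy]; module
        rw [dist_eq_norm, this, norm_smul, ← dist_eq_norm x c, hxc, Real.norm_of_nonneg]
        · field_simp
        · rw [sub_nonneg, div_le_one (by positivity)]; linarith
      have s1 : Metric.ball y (ε / 2) ⊆ Metric.closedBall x ε :=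
        Metric.ball_subset_closedBall.trans
          (Metric.closedBall_subset_closedBall' (by rw [hyx]; linarith))
      have s2 : Disjoint (Metric.ball y (ε / 2)) (Metric.sphere c r ∩ Metric.closedBall x ε) := by
        rw [Set.disjoint_left]
        intro z hz hz2
        have a1 : dist z y < ε / 2 := hz
        have a2 : dist z c = r := hz2.1
        have := dist_triangle z y c
        linarith
      have d1 := hD y y (ε / 2) (by linarith) (Metric.ball_subset_ball (by linarith))
      have d2 := hD x y (2 * (ε / 2)) (by linarith) (Metric.ball_subset_ball' (by rw [hyx]; linarith))
      have d3 : ν.real (Metric.closedBall x ε) ≤ ν.real (Metric.ball x (2 * (2 * (ε / 2)))) :=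
        measureReal_mono (Metric.closedBall_subset_ball (by linarith)) (aux_ball_fin _ _ _)
      have d4 : ν.real (Metric.closedBall x ε) ≤ D * D * ν.real (Metric.ball y (ε / 2)) := by
        nlinarith [mul_le_mul_of_nonneg_left d1 hD0.le]
      have d5 : ν.real (Metric.ball y (ε / 2)) + ν.real (Metric.sphere c r ∩ Metric.closedBall x ε)
          ≤ ν.real (Metric.closedBall x ε) := by
        rw [← measureReal_union s2 (Metric.isClosed_sphere.inter
          Metric.isClosed_closedBall).measurableSet (aux_ball_fin _ _ _)
          (measure_ne_top_of_subset inter_subset_right (aux_cball_fin ν x ε))]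
        exact measureReal_mono (union_subset s1 inter_subset_right) (aux_cball_fin _ _ _)
      have d6 : 0 < ν.real (Metric.closedBall x ε) :=
        (hpos x ε hε).trans_le (measureReal_mono Metric.ball_subset_closedBall (aux_cball_fin _ _ _))
      have d7 : ν.real (Metric.sphere c r ∩ Metric.closedBall x ε) ≤
          (1 - 1 / (D * D)) * ν.real (Metric.closedBall x ε) := by
        have : 1 / (D * D) * ν.real (Metric.closedBall x ε) ≤ ν.real (Metric.ball y (ε / 2)) := by
          rw [one_div, inv_mul_le_iff₀ (by positivity)]; exact d4
        linarith
      rw [← ofReal_measureReal (aux_cball_fin ν x ε), ← ofReal_measureReal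
        (measure_ne_top_of_subset inter_subset_right (aux_cball_fin ν x ε)),
        ← ENNReal.ofReal_div_of_pos d6]
      apply ENNReal.ofReal_le_ofReal
      rw [div_le_iff₀ d6]
      exact d7
    have h1 : (1 : ℝ≥0∞) ≤ ENNReal.ofReal (1 - 1 / (D * D)) := le_of_tendsto h hle
    rw [← ENNReal.ofReal_one] at h1
    have h2 := (ENNReal.ofReal_le_ofReal_iff' ).1 h1
    have : 0 < 1 / (D * D) := by positivity
    rcases h2 with h2 | h2 <;> linarith
  rw [ae_iff] at hno
  simpa using hno

/-- Continuity of the measure of a family of shrinking balls. -/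
theorem aux_cont (ν : Measure F) [IsLocallyFiniteMeasure ν]
    (hs : ∀ c : F, ∀ r : ℝ, 0 < r → ν (Metric.sphere c r) = 0)
    (A : Set F) (hA : MeasurableSet A) (c x : F) (r : ℝ) (hr : 0 < r) :
    ContinuousOn (fun t : ℝ => ν.real (A ∩ Metric.ball (x + t • (c - x)) (t * r))) (Ioi 0) := by
  intro t₀ ht₀
  have ht₀ : 0 < t₀ := ht₀
  apply ContinuousAt.continuousWithinAt
  have hfin : ν (A ∩ Metric.ball (x + t₀ • (c - x)) (t₀ * r)) ≠ ⊤ :=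
    measure_ne_top_of_subset inter_subset_right (aux_ball_fin _ _ _)
  refine (ENNReal.tendsto_toReal hfin).comp ?_
  refine tendsto_measure_of_ae_tendsto_indicator (B := Metric.ball x ((t₀ + 1) * (‖c - x‖ + r)))
    (𝓝 t₀) (hA.inter measurableSet_ball) (fun t => hA.inter measurableSet_ball) measurableSet_ball
    (aux_ball_fin _ _ _) ?_ ?_
  · filter_upwards [Ioo_mem_nhds ht₀ (lt_add_one t₀)] with t ht
    refine inter_subset_right.trans (Metric.ball_subset_ball' ?_)
    rw [dist_eq_norm, add_sub_cancel_left, norm_smul, Real.norm_of_nonneg ht.1.le]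
    nlinarith [norm_nonneg (c - x), ht.2]
  · have : ∀ᵐ y ∂ν, y ∉ Metric.sphere (x + t₀ • (c - x)) (t₀ * r) :=
      measure_eq_zero_iff_ae_notMem.1 (hs _ _ (by positivity))
    filter_upwards [this] with y hy
    have hc : Continuous fun t : ℝ => dist y (x + t • (c - x)) - t * r := by fun_prop
    have hne : dist y (x + t₀ • (c - x)) - t₀ * r ≠ 0 := by
      intro h; exact hy (by rw [Metric.mem_sphere]; linarith)
    rcases lt_or_gt_of_ne hne with h | h
    · filter_upwards [hc.continuousAt.eventually (gt_mem_nhds h)] with t ht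
      simp only [mem_inter_iff, Metric.mem_ball]
      exact and_congr_right fun _ => ⟨fun _ => by linarith, fun _ => by linarith⟩
    · filter_upwards [hc.continuousAt.eventually (lt_mem_nhds h)] with t ht
      simp only [mem_inter_iff, Metric.mem_ball]
      exact and_congr_right fun _ => ⟨fun _ => by linarith, fun _ => by linarith⟩

theorem aux_growth (ν : Measure F) [IsLocallyFiniteMeasure ν] (D : ℝ)
    (hD : ∀ x y : F, ∀ r : ℝ, 0 < r → Metric.ball y r ⊆ Metric.ball x (2 * r) →
      ν.real (Metric.ball x (2 * r)) ≤ D * ν.real (Metric.ball y r)) (hD0 : 0 < D)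
    (hpos : ∀ x : F, ∀ r : ℝ, 0 < r → 0 < ν.real (Metric.ball x r))
    (g : ℝ) (hg0 : 0 < g) (hg1 : g < 1) (A : Set F) (hA : MeasurableSet A)
    (c : F) (r : ℝ) (hr : 0 < r)
    (hlow : ν.real (A ∩ Metric.ball c r) ≤ g * ν.real (Metric.ball c r))
    (A' : Set F)
    (hA' : ∀ y : F, ∀ s : ℝ, 0 < s →
      ν.real (A ∩ Metric.ball y s) = g * ν.real (Metric.ball y s) → Metric.ball y s ⊆ A') :
    (1 + (1 - g) / (D * D * D)) * ν.real (A ∩ Metric.ball c r) ≤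
      ν.real (A' ∩ Metric.ball c r) := by
  have := aux_unif ν D hD hD0.le
  have hs := aux_sphere ν D hD hD0 hpos
  have hcl : ∀ (x : F) (s : ℝ), 0 < s → Metric.ball x s =ᵐ[ν] Metric.closedBall x s := by
    intro x s hs'
    have hn : ∀ᵐ y ∂ν, y ∉ Metric.sphere x s := measure_eq_zero_iff_ae_notMem.1 (hs x s hs')
    rw [Filter.eventuallyEq_set]
    filter_upwards [hn] with y hy
    rw [Metric.mem_ball, Metric.mem_closedBall]
    rw [Metric.mem_sphere] at hy
    exact ⟨le_of_lt, fun h => lt_of_le_of_ne h hy⟩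
  -- good points
  set Good : Set F := {x | x ∈ Metric.ball c r ∧ ∃ t : ℝ, 0 < t ∧ t ≤ 1 ∧
    ν.real (A ∩ Metric.ball (x + t • (c - x)) (t * r)) =
      g * ν.real (Metric.ball (x + t • (c - x)) (t * r))} with hGood
  have hgood : ∀ᵐ x ∂ν, x ∈ A ∩ Metric.ball c r → x ∈ Good := by
    have key := IsUnifLocDoublingMeasure.ae_tendsto_measure_inter_div ν A 1
    rw [ae_restrict_iff' hA] at key
    filter_upwards [key] with x hx hxA
    refine ⟨hxA.2, ?_⟩
    have hxc : dist x c < r := hxA.2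
    have h := hx hxA.1 (l := 𝓝[>] (0 : ℝ)) (fun t => x + t • (c - x)) (fun t => t * r) (by
        refine tendsto_nhdsWithin_iff.2 ⟨?_, ?_⟩
        · have : Continuous fun t : ℝ => t * r := by fun_prop
          simpa using (this.tendsto 0).mono_left nhdsWithin_le_nhds
        · filter_upwards [self_mem_nhdsWithin] with t ht
          exact mul_pos ht hr) (by
        filter_upwards [self_mem_nhdsWithin] with t ht
        have ht : (0 : ℝ) < t := ht
        rw [Metric.mem_closedBall, dist_comm, dist_eq_norm, add_sub_cancel_left, norm_smul,
          Real.norm_of_nonneg ht.le, ← dist_eq_norm, dist_comm]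
        nlinarith)
    have hg' : ENNReal.ofReal g < 1 := by rw [← ENNReal.ofReal_one]; exact (ENNReal.ofReal_lt_ofReal_iff one_pos).2 hg1
    obtain ⟨t₁, ht₁, ht₁1, hgt⟩ : ∃ t : ℝ, 0 < t ∧ t < 1 ∧
        g * ν.real (Metric.ball (x + t • (c - x)) (t * r)) <
        ν.real (A ∩ Metric.ball (x + t • (c - x)) (t * r)) := by
      have := ((h.eventually (lt_mem_nhds hg')).and (Ioo_mem_nhdsGT one_pos)).exists
      obtain ⟨t, ht, ht0, ht1⟩ := this
      refine ⟨t, ht0, ht1, ?_⟩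
      have hb : 0 < t * r := mul_pos ht0 hr
      have e1 := measure_congr (hcl (x + t • (c - x)) _ hb)
      have e2 : ν (A ∩ Metric.ball (x + t • (c - x)) (t * r)) =
        ν (A ∩ Metric.closedBall (x + t • (c - x)) (t * r)) :=
        measure_congr ((ae_eq_refl A).inter (hcl (x + t • (c - x)) _ hb))
      rw [← e1, ← e2] at ht
      have hp := hpos (x + t • (c - x)) _ hb
      rw [← ofReal_measureReal (aux_ball_fin ν _ _), ← ofReal_measureReal
        (measure_ne_top_of_subset inter_subset_right (aux_ball_fin ν _ _)),
        ← ENNReal.ofReal_div_of_pos hp, ENNReal.ofReal_lt_ofReal_iff'] at ht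
      exact (lt_div_iff₀ hp).1 ht.1
    have c1 := aux_cont ν hs A hA c x r hr
    have c2 := aux_cont ν hs univ MeasurableSet.univ c x r hr
    simp only [univ_inter] at c2
    have c3 : ContinuousOn (fun t : ℝ => ν.real (A ∩ Metric.ball (x + t • (c - x)) (t * r)) -
      g * ν.real (Metric.ball (x + t • (c - x)) (t * r))) (Icc t₁ 1) :=
      (c1.sub (continuousOn_const.mul c2)).mono fun t ht => ht₁.trans_le ht.1
    have iv := intermediate_value_Icc' ht₁1.le c3
    have : (0 : ℝ) ∈ Icc (ν.real (A ∩ Metric.ball (x + (1 : ℝ) • (c - x)) (1 * r)) -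
      g * ν.real (Metric.ball (x + (1 : ℝ) • (c - x)) (1 * r)))
      (ν.real (A ∩ Metric.ball (x + t₁ • (c - x)) (t₁ * r)) -
      g * ν.real (Metric.ball (x + t₁ • (c - x)) (t₁ * r))) := by
      constructor
      · simp only [one_smul, one_mul, add_sub_cancel]; linarith
      · linarith
    obtain ⟨t, ht, ht'⟩ := iv this
    exact ⟨t, ht₁.trans_le ht.1, ht.2, by simpa [sub_eq_zero] using ht'⟩
  have hch : ∀ x : F, ∃ t : ℝ, x ∈ Good → (0 < t ∧ t ≤ 1 ∧
    ν.real (A ∩ Metric.ball (x + t • (c - x)) (t * r)) =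
      g * ν.real (Metric.ball (x + t • (c - x)) (t * r))) := by
    intro x
    by_cases hx : x ∈ Good
    · obtain ⟨t, ht⟩ := hx.2; exact ⟨t, fun _ => ht⟩
    · exact ⟨0, fun h => absurd h hx⟩
  choose τ hτ using hch
  set w : F → F := fun x => x + τ x • (c - x) with hw
  set ρ : F → ℝ := fun x => τ x * r with hρ
  have hρpos : ∀ x ∈ Good, 0 < ρ x := fun x hx => mul_pos (hτ x hx).1 hr
  obtain ⟨u, huG, hdisj, hcov⟩ := Vitali.exists_disjoint_subfamily_covering_enlargement_closedBall
    Good w ρ r (fun x hx => by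
      have := (hτ x hx).2.1
      simp only [hρ]; nlinarith) 4 (by norm_num)
  have hsub : ∀ x ∈ Good, Metric.ball (w x) (ρ x) ⊆ A' ∩ Metric.ball c r := by
    intro x hx
    refine subset_inter (hA' _ _ (hρpos x hx) (hτ x hx).2.2) (Metric.ball_subset_ball' ?_)
    have hxc : dist x c < r := hx.1
    have : w x - c = (1 - τ x) • (x - c) := by simp only [hw]; module
    rw [dist_eq_norm, this, norm_smul, ← dist_eq_norm x c,
      Real.norm_of_nonneg (by linarith [(hτ x hx).2.1])]
    simp only [hρ]
    nlinarith [(hτ x hx).2.1]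
  have hmem : ∀ x ∈ Good, x ∈ Metric.ball (w x) (ρ x) := by
    intro x hx
    have hxc : dist x c < r := hx.1
    rw [Metric.mem_ball, dist_comm, dist_eq_norm]
    simp only [hw, hρ]
    rw [add_sub_cancel_left, norm_smul, Real.norm_of_nonneg (hτ x hx).1.le, ← dist_eq_norm, dist_comm]
    nlinarith [(hτ x hx).1]
  have hucount : u.Countable := by
    refine hdisj.countable_of_nonempty_interior fun x hx => ?_
    exact ⟨w x, Metric.ball_subset_interior_closedBall (Metric.mem_ball_self (hρpos x (huG hx)))⟩
  have hdisj' : u.PairwiseDisjoint fun x => Metric.ball (w x) (ρ x) :=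
    hdisj.mono fun x => Metric.ball_subset_closedBall
  set V : Set F := ⋃ x ∈ u, Metric.ball (w x) (ρ x) with hV
  have hVm : MeasurableSet V := MeasurableSet.biUnion hucount fun _ _ => measurableSet_ball
  have hVsub : V ⊆ A' ∩ Metric.ball c r := iUnion₂_subset fun x hx => hsub x (huG hx)
  set G : ℝ≥0∞ := ENNReal.ofReal ((1 - g) / (D * D * D)) with hG
  -- the disjoint part
  have hVA : G * ν (A ∩ Metric.ball c r) ≤ ν (V \ A) := by
    have e1 : V \ A = ⋃ x ∈ u, (Metric.ball (w x) (ρ x) \ A) := by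
      rw [hV]; simp only [iUnion_sdiff]
    have e2 : ν (V \ A) = ∑' x : u, ν (Metric.ball (w x) (ρ x) \ A) := by
      rw [e1]
      exact measure_biUnion hucount (hdisj'.mono fun x => sdiff_subset)
        fun _ _ => measurableSet_ball.diff hA
    have e3 : ν (A ∩ Metric.ball c r) ≤ ∑' x : u, ν (Metric.closedBall (w x) (4 * ρ x)) := by
      calc ν (A ∩ Metric.ball c r) ≤ ν (⋃ x ∈ u, Metric.closedBall (w x) (4 * ρ x)) := by
            apply measure_mono_ae
            filter_upwards [hgood] with x hx hxA
            have hxG := hx hxA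
            obtain ⟨b, hb, hb'⟩ := hcov x hxG
            exact mem_iUnion₂.2 ⟨b, hb, hb' (Metric.ball_subset_closedBall (hmem x hxG))⟩
        _ ≤ _ := measure_biUnion_le _ hucount _
    rw [e2]
    calc G * ν (A ∩ Metric.ball c r) ≤ G * ∑' x : u, ν (Metric.closedBall (w x) (4 * ρ x)) := by
          gcongr
      _ = ∑' x : u, G * ν (Metric.closedBall (w x) (4 * ρ x)) := ENNReal.tsum_mul_left.symm
      _ ≤ _ := ENNReal.tsum_le_tsum fun x => ?_
    obtain ⟨x, hx⟩ := x
    have hx := huG hx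
    have hp := hρpos x hx
    have f1 := hD (w x) (w x) _ hp (Metric.ball_subset_ball (by linarith))
    have f2 := hD (w x) (w x) (2 * ρ x) (by linarith) (Metric.ball_subset_ball (by linarith))
    have f3 := hD (w x) (w x) (2 * (2 * ρ x)) (by linarith) (Metric.ball_subset_ball (by linarith))
    have f4 : ν.real (Metric.closedBall (w x) (4 * ρ x)) ≤
        ν.real (Metric.ball (w x) (2 * (2 * (2 * ρ x)))) :=
      measureReal_mono (Metric.closedBall_subset_ball (by linarith)) (aux_ball_fin _ _ _)
    have f5 : ν.real (Metric.closedBall (w x) (4 * ρ x)) ≤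
        D * D * D * ν.real (Metric.ball (w x) (ρ x)) := by
      have := mul_le_mul_of_nonneg_left f2 hD0.le
      have := mul_le_mul_of_nonneg_left f1 (mul_pos hD0 hD0).le
      linarith
    have f6 : ν.real (Metric.ball (w x) (ρ x) \ A) = (1 - g) * ν.real (Metric.ball (w x) (ρ x)) := by
      have h1 := measureReal_inter_add_sdiff (μ := ν) (s := Metric.ball (w x) (ρ x)) hA
        (aux_ball_fin _ _ _)
      have h2 := (hτ x hx).2.2
      rw [inter_comm] at h1
      change ν.real (A ∩ Metric.ball (w x) (ρ x)) = g * ν.real (Metric.ball (w x) (ρ x)) at h2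
      linarith
    have hDDD : 0 < D * D * D := by positivity
    change G * ν (Metric.closedBall (w x) (4 * ρ x)) ≤ ν (Metric.ball (w x) (ρ x) \ A)
    rw [← ofReal_measureReal (aux_cball_fin ν _ _), ← ofReal_measureReal
        (measure_ne_top_of_subset sdiff_subset (aux_ball_fin ν (w x) (ρ x))), hG,
        ← ENNReal.ofReal_mul (div_nonneg (by linarith) hDDD.le)]
    apply ENNReal.ofReal_le_ofReal
    rw [f6, div_mul_eq_mul_div, div_le_iff₀ hDDD]
    have := mul_le_mul_of_nonneg_left f5 (by linarith : (0:ℝ) ≤ 1 - g)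
    linarith
  -- assemble
  have hfin : ν (A' ∩ Metric.ball c r) ≠ ⊤ :=
    measure_ne_top_of_subset inter_subset_right (aux_ball_fin ν c r)
  have hfinA : ν (A ∩ Metric.ball c r) ≠ ⊤ :=
    measure_ne_top_of_subset inter_subset_right (aux_ball_fin ν c r)
  have hmain : ν (A ∩ Metric.ball c r) + G * ν (A ∩ Metric.ball c r) ≤ ν (A' ∩ Metric.ball c r) := by
    calc ν (A ∩ Metric.ball c r) + G * ν (A ∩ Metric.ball c r)
        ≤ ν (A ∩ Metric.ball c r) + ν (V \ A) := by gcongr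
      _ = ν ((A ∩ Metric.ball c r) ∪ (V \ A)) := by
          rw [measure_union _ (hVm.diff hA)]
          exact disjoint_sdiff_right.mono_left inter_subset_left
      _ ≤ ν (A' ∩ Metric.ball c r) := by
          apply measure_mono_ae
          filter_upwards [hgood] with x hx hxA
          rcases hxA with hxA | hxA
          · exact hsub x (hx hxA) (hmem x (hx hxA))
          · exact hVsub hxA.1
  have := ENNReal.toReal_mono hfin hmain
  have hG0 : 0 ≤ (1 - g) / (D * D * D) := div_nonneg (by linarith) (by positivity)
  rw [ENNReal.toReal_add hfinA (ENNReal.mul_ne_top ENNReal.ofReal_ne_top hfinA),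
    ENNReal.toReal_mul, ENNReal.toReal_ofReal hG0] at this
  simp only [Measure.real]
  linarith

end LocalPart

section Interp

theorem aux_rpow_zpow (p : ℝ) (m : ℤ) : ((2 : ℝ≥0∞) ^ m) ^ p = ((2 : ℝ≥0∞) ^ p) ^ m := by
  rw [← ENNReal.rpow_intCast, ← ENNReal.rpow_intCast, ← ENNReal.rpow_mul, ← ENNReal.rpow_mul,
    mul_comm]

theorem aux_pt_upper (p : ℝ) (hp : 0 < p) (y : ℝ≥0∞) :
    y ^ p ≤ ∑' m : ℤ, ((2 : ℝ≥0∞) ^ p) ^ (m + 1) * {z : ℝ≥0∞ | 2 ^ m < z}.indicator 1 y := by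
  rcases eq_or_ne y 0 with rfl | h0
  · simp [hp]
  rcases eq_or_ne y ⊤ with rfl | htop
  · rw [ENNReal.top_rpow_of_pos hp]
    have : ∀ m : ℤ, (1 : ℝ≥0∞) ≤ ((2 : ℝ≥0∞) ^ p) ^ (m.natAbs + 1) := fun m =>
      one_le_pow₀ (ENNReal.one_le_rpow (by norm_num) hp)
    calc (⊤ : ℝ≥0∞) = ∑' m : ℕ, 1 := (ENNReal.tsum_const_eq_top_of_ne_zero one_ne_zero).symm
      _ ≤ ∑' m : ℕ, (fun m : ℤ => ((2 : ℝ≥0∞) ^ p) ^ (m + 1) *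
            {z : ℝ≥0∞ | 2 ^ m < z}.indicator 1 ⊤) (m : ℤ) := by
          refine ENNReal.tsum_le_tsum fun m => ?_
          have h : (⊤ : ℝ≥0∞) ∈ {z : ℝ≥0∞ | 2 ^ (m : ℤ) < z} := by
            simp only [mem_ofPred_eq]
            exact (ENNReal.zpow_lt_top (by norm_num) (by norm_num) _)
          simp only [indicator_of_mem h, Pi.one_apply, mul_one]
          have := one_le_pow₀ (n := m + 1) (ENNReal.one_le_rpow (x := 2) (by norm_num) hp)
          exact_mod_cast this
      _ ≤ _ := ENNReal.tsum_comp_le_tsum_of_injective Nat.cast_injective _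
  obtain ⟨m, hm⟩ := ENNReal.exists_mem_Ioc_zpow h0 htop (y := 2) (by norm_num) (by norm_num)
  refine le_trans ?_ (ENNReal.le_tsum m)
  have h : y ∈ {z : ℝ≥0∞ | 2 ^ m < z} := hm.1
  rw [indicator_of_mem h, Pi.one_apply, mul_one, ← aux_rpow_zpow]
  exact ENNReal.rpow_le_rpow hm.2 hp.le

theorem aux_pt_lower (p : ℝ) (hp : 0 < p) (y : ℝ≥0∞) (hy : y ≠ ⊤) :
    ∑' m : ℤ, ((2 : ℝ≥0∞) ^ p) ^ m * {z : ℝ≥0∞ | 2 ^ m < z}.indicator 1 y ≤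
      (1 - ((2 : ℝ≥0∞) ^ p)⁻¹)⁻¹ * y ^ p := by
  rcases eq_or_ne y 0 with rfl | h0
  · simp
  have ha0 : (2 : ℝ≥0∞) ^ p ≠ 0 := by positivity
  have hatop : (2 : ℝ≥0∞) ^ p ≠ ⊤ := ENNReal.rpow_ne_top_of_nonneg hp.le (by norm_num)
  obtain ⟨N, hN⟩ := ENNReal.exists_mem_Ioc_zpow h0 hy (y := 2) (by norm_num) (by norm_num)
  calc ∑' m : ℤ, ((2 : ℝ≥0∞) ^ p) ^ m * {z : ℝ≥0∞ | 2 ^ m < z}.indicator 1 y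
      ≤ ∑' m : ℤ, ∑' j : ℕ, (if m = N - j then ((2 : ℝ≥0∞) ^ p) ^ (N - j) else 0) := by
        refine ENNReal.tsum_le_tsum fun m => ?_
        by_cases h : y ∈ {z : ℝ≥0∞ | 2 ^ m < z}
        · rw [indicator_of_mem h, Pi.one_apply, mul_one]
          have h1 : (2 : ℝ≥0∞) ^ m < 2 ^ (N + 1) := lt_of_lt_of_le h hN.2
          have h2 : m < N + 1 := by
            by_contra hcon
            exact absurd (ENNReal.zpow_le_of_le (by norm_num) (not_lt.1 hcon)) (not_le.2 h1)
          refine le_trans ?_ (ENNReal.le_tsum (N - m).toNat)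
          have h3 : ((N - m).toNat : ℤ) = N - m := Int.toNat_of_nonneg (by lia)
          rw [h3]; simp
        · simp [indicator_of_notMem h]
    _ = ∑' j : ℕ, ∑' m : ℤ, (if m = N - j then ((2 : ℝ≥0∞) ^ p) ^ (N - j) else 0) :=
        ENNReal.tsum_comm
    _ = ∑' j : ℕ, ((2 : ℝ≥0∞) ^ p) ^ N * (((2 : ℝ≥0∞) ^ p)⁻¹) ^ j := by
        congr 1; ext j
        rw [tsum_ite_eq, ENNReal.zpow_sub ha0 hatop]
        simp [ENNReal.inv_pow]
    _ = (1 - ((2 : ℝ≥0∞) ^ p)⁻¹)⁻¹ * (2 ^ N) ^ p := by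
        rw [ENNReal.tsum_mul_left, ENNReal.tsum_geometric, mul_comm, aux_rpow_zpow]
    _ ≤ _ := by
        gcongr
        exact hN.1.le

variable {n : ℕ} (μ : Measure (EuclideanSpace ℝ (Fin n)))
    (𝔊 : Set (Set (EuclideanSpace ℝ (Fin n))))

theorem aux_lt_maxOp {f : EuclideanSpace ℝ (Fin n) → ℝ} {a : ℝ≥0∞} {x} :
    a < maxOp μ 𝔊 f x ↔ ∃ B ∈ 𝔊, x ∈ B ∧ 0 < μ B ∧
      a < (∫⁻ y in B, ENNReal.ofReal |f y| ∂μ) / μ B := by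
  simp only [maxOp, lt_iSup_iff, exists_prop]

theorem aux_open (ho : ∀ B ∈ 𝔊, IsOpen B) (f : EuclideanSpace ℝ (Fin n) → ℝ) (a : ℝ≥0∞) :
    IsOpen {x | a < maxOp μ 𝔊 f x} := by
  rw [isOpen_iff_forall_mem_open]
  intro x hx
  obtain ⟨B, hB, hxB, h1, h2⟩ := (aux_lt_maxOp μ 𝔊).1 hx
  exact ⟨B, fun y hy => (aux_lt_maxOp μ 𝔊).2 ⟨B, hB, hy, h1, h2⟩, ho B hB, hxB⟩

theorem aux_ind (E : Set (EuclideanSpace ℝ (Fin n))) (hE : MeasurableSet E)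
    (B : Set (EuclideanSpace ℝ (Fin n))) :
    ∫⁻ y in B, ENNReal.ofReal |E.indicator (1 : EuclideanSpace ℝ (Fin n) → ℝ) y| ∂μ = μ (E ∩ B) := by
  have : (fun y => ENNReal.ofReal |E.indicator (1 : EuclideanSpace ℝ (Fin n) → ℝ) y|) =
      E.indicator 1 := by
    ext y
    by_cases hy : y ∈ E <;> simp [hy]
  rw [this, lintegral_indicator_one hE, Measure.restrict_apply hE]

theorem aux_pt_f (m : ℤ) (y : ℝ≥0∞) (hy : y ≠ ⊤) :
    y ≤ (2 : ℝ≥0∞) ^ (m - 1) + ∑' j : ℕ, (2 : ℝ≥0∞) ^ (m + j) *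
      {z : ℝ≥0∞ | 2 ^ (m + j - 1) < z}.indicator 1 y := by
  by_cases h : y ≤ 2 ^ (m - 1)
  · exact h.trans le_self_add
  push Not at h
  have h0 : y ≠ 0 := (lt_of_le_of_lt zero_le h).ne'
  obtain ⟨N, hN⟩ := ENNReal.exists_mem_Ioc_zpow h0 hy (y := 2) (by norm_num) (by norm_num)
  have hNm : m - 1 < N + 1 := by
    by_contra hcon
    exact absurd (ENNReal.zpow_le_of_le (by norm_num) (not_lt.1 hcon))
      (not_le.2 (lt_of_lt_of_le h hN.2))
  have h3 : ((N + 1 - m).toNat : ℤ) = N + 1 - m := Int.toNat_of_nonneg (by lia)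
  refine le_trans ?_ (le_add_left (ENNReal.le_tsum (N + 1 - m).toNat))
  have h4 : m + ((N + 1 - m).toNat : ℤ) = N + 1 := by lia
  have h5 : y ∈ {z : ℝ≥0∞ | 2 ^ (m + ((N + 1 - m).toNat : ℤ) - 1) < z} := by
    rw [h4]; simpa using hN.1
  rw [indicator_of_mem h5, h4]
  simpa using hN.2

theorem aux_geo (m : ℤ) : (2 : ℝ≥0∞) ^ (m - 1) +
    ∑' j : ℕ, (2 : ℝ≥0∞) ^ (m + j) * (4⁻¹) ^ (j + 1) ≤ 2 ^ m := by
  have h20 : (2 : ℝ≥0∞) ≠ 0 := by norm_num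
  have h2t : (2 : ℝ≥0∞) ≠ ⊤ := by norm_num
  have e : ∀ j : ℕ, (2 : ℝ≥0∞) ^ (m + j) * (4⁻¹) ^ (j + 1) = 2 ^ m * 4⁻¹ * (2⁻¹) ^ j := by
    intro j
    rw [ENNReal.zpow_add h20 h2t, zpow_natCast, pow_succ,
      show (4 : ℝ≥0∞) = 2 * 2 by norm_num, ENNReal.mul_inv (by simp) (by simp), mul_pow]
    have : (2 : ℝ≥0∞) ^ j * 2⁻¹ ^ j = 1 := by
      rw [← mul_pow, ENNReal.mul_inv_cancel h20 h2t, one_pow]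
    calc (2 : ℝ≥0∞) ^ m * 2 ^ j * (2⁻¹ ^ j * 2⁻¹ ^ j * (2⁻¹ * 2⁻¹))
        = 2 ^ m * (2⁻¹ * 2⁻¹) * 2⁻¹ ^ j * (2 ^ j * 2⁻¹ ^ j) := by ring
      _ = _ := by rw [this, mul_one]
  simp_rw [e]
  rw [ENNReal.tsum_mul_left, ENNReal.tsum_geometric, ENNReal.one_sub_inv_two, inv_inv,
    ENNReal.zpow_sub h20 h2t, zpow_one, mul_assoc, ← mul_add]
  have : (4 : ℝ≥0∞)⁻¹ * 2 = 2⁻¹ := by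
    rw [show (4 : ℝ≥0∞) = 2 * 2 by norm_num, ENNReal.mul_inv (by simp) (by simp), mul_assoc,
      ENNReal.inv_mul_cancel h20 h2t, mul_one]
  rw [this, ENNReal.inv_two_add_inv_two, mul_one]

theorem aux_weak (f : EuclideanSpace ℝ (Fin n) → ℝ) (hf : Measurable f) (m : ℤ) :
    {x | (2 : ℝ≥0∞) ^ m < maxOp μ 𝔊 f x} ⊆ ⋃ j : ℕ, {x | ((4 : ℝ≥0∞)⁻¹) ^ (j + 1) <
      maxOp μ 𝔊 ({y | (2 : ℝ≥0∞) ^ (m + j - 1) < ENNReal.ofReal |f y|}.indicator 1) x} := by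
  intro x hx
  by_contra hcon
  simp only [mem_iUnion, mem_ofPred_eq, not_exists, not_lt] at hcon
  obtain ⟨B, hB, hxB, h1, h2⟩ := (aux_lt_maxOp μ 𝔊).1 hx
  have hfm : Measurable fun y => ENNReal.ofReal |f y| := by fun_prop
  have hm : ∀ j : ℕ, MeasurableSet {y | (2 : ℝ≥0∞) ^ (m + j - 1) < ENNReal.ofReal |f y|} :=
    fun j => measurableSet_lt measurable_const hfm
  refine absurd h2 (not_lt.2 (ENNReal.div_le_of_le_mul ?_))
  have hj : ∀ j : ℕ, μ ({y | (2 : ℝ≥0∞) ^ (m + j - 1) < ENNReal.ofReal |f y|} ∩ B) ≤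
      ((4 : ℝ≥0∞)⁻¹) ^ (j + 1) * μ B := by
    intro j
    by_contra hc
    push Not at hc
    refine absurd (hcon j) (not_le.2 ((aux_lt_maxOp μ 𝔊).2 ⟨B, hB, hxB, h1, ?_⟩))
    rw [aux_ind μ _ (hm j)]
    have hBt : μ B ≠ ⊤ := by
      rintro h
      rw [h, ENNReal.mul_top (by simp)] at hc
      exact not_top_lt hc
    rwa [ENNReal.lt_div_iff_mul_lt (Or.inl h1.ne') (Or.inl hBt)]
  calc ∫⁻ y in B, ENNReal.ofReal |f y| ∂μ
      ≤ ∫⁻ y in B, ((2 : ℝ≥0∞) ^ (m - 1) + ∑' j : ℕ, (2 : ℝ≥0∞) ^ (m + j) *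
        {y | (2 : ℝ≥0∞) ^ (m + j - 1) < ENNReal.ofReal |f y|}.indicator 1 y) ∂μ :=
        lintegral_mono fun y => aux_pt_f m (ENNReal.ofReal |f y|) ENNReal.ofReal_ne_top
    _ = 2 ^ (m - 1) * μ B + ∑' j : ℕ, (2 : ℝ≥0∞) ^ (m + j) *
        μ ({y | (2 : ℝ≥0∞) ^ (m + j - 1) < ENNReal.ofReal |f y|} ∩ B) := by
        rw [lintegral_add_left measurable_const, lintegral_tsum]
        · simp only [lintegral_const, Measure.restrict_apply MeasurableSet.univ, univ_inter]
          congr 2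
          ext j
          rw [lintegral_const_mul _ (measurable_one.indicator (hm j)),
            lintegral_indicator_one (hm j), Measure.restrict_apply (hm j)]
        · intro j
          exact ((measurable_one.indicator (hm j)).const_mul _).aemeasurable
    _ ≤ 2 ^ (m - 1) * μ B + ∑' j : ℕ, (2 : ℝ≥0∞) ^ (m + j) * (((4 : ℝ≥0∞)⁻¹) ^ (j + 1) * μ B) := by
        gcongr with j
        exact hj j
    _ = (2 ^ (m - 1) + ∑' j : ℕ, (2 : ℝ≥0∞) ^ (m + j) * ((4 : ℝ≥0∞)⁻¹) ^ (j + 1)) * μ B := by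
        rw [add_mul, ← ENNReal.tsum_mul_right]
        simp only [mul_assoc]
    _ ≤ 2 ^ m * μ B := by gcongr; exact aux_geo m

theorem aux_interp (ho : ∀ B ∈ 𝔊, IsOpen B) (C A : ℝ≥0∞) (hC : C ≠ ⊤)
    (hT : ∀ (j : ℕ) (E : Set (EuclideanSpace ℝ (Fin n))), MeasurableSet E →
      μ {x | ((4 : ℝ≥0∞)⁻¹) ^ (j + 1) < maxOp μ 𝔊 (E.indicator 1) x} ≤ C * A ^ j * μ E)
    (p : ℝ) (hp : 0 < p) (hA : A < 2 ^ p) : BoundedOnLp μ μ 𝔊 p := by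
  set a : ℝ≥0∞ := 2 ^ p with ha
  have ha0 : a ≠ 0 := by positivity
  have hatop : a ≠ ⊤ := ENNReal.rpow_ne_top_of_nonneg hp.le (by norm_num)
  have ha1 : 1 < a := ENNReal.one_lt_rpow (by norm_num) hp
  refine ⟨C * a ^ (2 : ℤ) * (1 - A * a⁻¹)⁻¹ * (1 - a⁻¹)⁻¹, ?_, ?_⟩
  · refine ENNReal.mul_ne_top (ENNReal.mul_ne_top (ENNReal.mul_ne_top hC ?_) ?_) ?_
    · exact ENNReal.zpow_ne_top ha0 hatop _
    · rw [ENNReal.inv_ne_top, ← div_eq_mul_inv]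
      exact (tsub_pos_of_lt ((ENNReal.div_lt_iff (Or.inl ha0) (Or.inl hatop)).2 (by simpa using hA))).ne'
    · rw [ENNReal.inv_ne_top]
      exact (tsub_pos_of_lt (ENNReal.inv_lt_one.2 ha1)).ne'
  intro f hf
  have hfm : Measurable fun y => ENNReal.ofReal |f y| := by fun_prop
  have hm : ∀ k : ℤ, MeasurableSet {y | (2 : ℝ≥0∞) ^ k < ENNReal.ofReal |f y|} :=
    fun j => measurableSet_lt measurable_const hfm
  have hMm : ∀ k : ℤ, MeasurableSet {x | (2 : ℝ≥0∞) ^ k < maxOp μ 𝔊 f x} :=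
    fun k => (aux_open μ 𝔊 ho f _).measurableSet
  have hlow : ∑' k : ℤ, a ^ k * μ {y | (2 : ℝ≥0∞) ^ k < ENNReal.ofReal |f y|} ≤
      (1 - a⁻¹)⁻¹ * ∫⁻ x, ENNReal.ofReal |f x| ^ p ∂μ := by
    calc ∑' k : ℤ, a ^ k * μ {y | (2 : ℝ≥0∞) ^ k < ENNReal.ofReal |f y|}
        = ∫⁻ x, ∑' k : ℤ, a ^ k *
            {y | (2 : ℝ≥0∞) ^ k < ENNReal.ofReal |f y|}.indicator 1 x ∂μ := by
          rw [lintegral_tsum fun k => ((measurable_one.indicator (hm k)).const_mul _).aemeasurable]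
          congr 1; ext k
          rw [lintegral_const_mul _ (measurable_one.indicator (hm k)), lintegral_indicator_one (hm k)]
      _ ≤ ∫⁻ x, (1 - a⁻¹)⁻¹ * ENNReal.ofReal |f x| ^ p ∂μ :=
          lintegral_mono fun x => aux_pt_lower p hp _ ENNReal.ofReal_ne_top
      _ = _ := lintegral_const_mul _ (by fun_prop)
  calc ∫⁻ x, maxOp μ 𝔊 f x ^ p ∂μ
      ≤ ∫⁻ x, ∑' m : ℤ, a ^ (m + 1) * {x | (2 : ℝ≥0∞) ^ m < maxOp μ 𝔊 f x}.indicator 1 x ∂μ :=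
        lintegral_mono fun x => aux_pt_upper p hp _
    _ = ∑' m : ℤ, a ^ (m + 1) * μ {x | (2 : ℝ≥0∞) ^ m < maxOp μ 𝔊 f x} := by
        rw [lintegral_tsum fun k => ((measurable_one.indicator (hMm k)).const_mul _).aemeasurable]
        congr 1; ext k
        rw [lintegral_const_mul _ (measurable_one.indicator (hMm k)), lintegral_indicator_one (hMm k)]
    _ ≤ ∑' m : ℤ, a ^ (m + 1) * ∑' j : ℕ, C * A ^ j *
          μ {y | (2 : ℝ≥0∞) ^ (m + j - 1) < ENNReal.ofReal |f y|} := by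
        refine ENNReal.tsum_le_tsum fun m => ?_
        gcongr
        calc _ ≤ _ := measure_mono (aux_weak μ 𝔊 f hf m)
          _ ≤ _ := measure_iUnion_le _
          _ ≤ _ := ENNReal.tsum_le_tsum fun j => hT j _ (hm _)
    _ = ∑' j : ℕ, ∑' m : ℤ, C * A ^ j * (a ^ (m + 1) *
          μ {y | (2 : ℝ≥0∞) ^ (m + j - 1) < ENNReal.ofReal |f y|}) := by
        rw [ENNReal.tsum_comm]
        congr 1; ext m
        rw [← ENNReal.tsum_mul_left]
        congr 1; ext j
        ring
    _ = ∑' j : ℕ, (C * a ^ (2 : ℤ)) * (A * a⁻¹) ^ j *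
          ∑' k : ℤ, a ^ k * μ {y | (2 : ℝ≥0∞) ^ k < ENNReal.ofReal |f y|} := by
        congr 1; ext j
        rw [← ENNReal.tsum_mul_left]
        conv_rhs => rw [← (Equiv.addRight (j - 1 : ℤ)).tsum_eq]
        congr 1; ext m
        simp only [Equiv.coe_addRight]
        have e1 : a ^ (m + 1) = a ^ (2 : ℤ) * a⁻¹ ^ j * a ^ (m + (j - 1 : ℤ)) := by
          rw [show m + 1 = 2 + (-(j : ℤ)) + (m + (j - 1 : ℤ)) by ring,
            ENNReal.zpow_add ha0 hatop, ENNReal.zpow_add ha0 hatop, ENNReal.zpow_neg, zpow_natCast,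
            ENNReal.inv_pow]
        rw [e1, mul_pow, show m + (j - 1 : ℤ) = m + j - 1 by ring]
        ring
    _ = C * a ^ (2 : ℤ) * (1 - A * a⁻¹)⁻¹ *
          ∑' k : ℤ, a ^ k * μ {y | (2 : ℝ≥0∞) ^ k < ENNReal.ofReal |f y|} := by
        rw [ENNReal.tsum_mul_right, ENNReal.tsum_mul_left, ENNReal.tsum_geometric]
    _ ≤ C * a ^ (2 : ℤ) * (1 - A * a⁻¹)⁻¹ *
          ((1 - a⁻¹)⁻¹ * ∫⁻ x, ENNReal.ofReal |f x| ^ p ∂μ) := by gcongr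
    _ = _ := by ring

end Interp

section Glue

variable {n : ℕ}

theorem aux_rect {R : Set (EuclideanSpace ℝ (Fin n))} (hR : IsRect R) :
    ∃ (L : (Fin n → ℝ) ≃L[ℝ] EuclideanSpace ℝ (Fin n)) (v : EuclideanSpace ℝ (Fin n)),
      R = v +ᵥ L '' Metric.ball 0 1 := by
  obtain ⟨f, S, ⟨a, b, hab, rfl⟩, rfl⟩ := hR
  have hl : ∀ i, (b i - a i) / 2 ≠ 0 := fun i => by have := hab i; linarith
  let Dg : (Fin n → ℝ) ≃L[ℝ] (Fin n → ℝ) := (LinearEquiv.piCongrRight fun i =>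
    LinearEquiv.smulOfNeZero ℝ ℝ ((b i - a i) / 2) (hl i)).toContinuousLinearEquiv
  have hDg : ∀ y i, Dg y i = (b i - a i) / 2 * y i := fun y i => rfl
  let φ := f.toRealAffineIsometryEquiv
  have hφ : ∀ x, φ x = f x := fun x => rfl
  let mid : EuclideanSpace ℝ (Fin n) := WithLp.toLp 2 fun i => (a i + b i) / 2
  refine ⟨Dg.trans ((EuclideanSpace.equiv (Fin n) ℝ).symm.trans
    φ.linearIsometryEquiv.toContinuousLinearEquiv), f mid, ?_⟩
  have hval : ∀ y : Fin n → ℝ, f mid + (Dg.trans ((EuclideanSpace.equiv (Fin n) ℝ).symm.trans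
    φ.linearIsometryEquiv.toContinuousLinearEquiv)) y = f (WithLp.toLp 2 (Dg y) + mid) := by
    intro y
    rw [← hφ, ← hφ, ← vadd_eq_add (WithLp.toLp 2 (Dg y)) mid, AffineIsometryEquiv.map_vadd,
      vadd_eq_add, add_comm]
    rfl
  ext x
  constructor
  · rintro ⟨s, hs, rfl⟩
    refine mem_vadd_set.2 ⟨_, ⟨Dg.symm (WithLp.ofLp (s - mid)), ?_, rfl⟩, ?_⟩
    · rw [mem_ball_zero_iff, pi_norm_lt_iff one_pos]
      intro i
      have h1 := hDg (Dg.symm (WithLp.ofLp (s - mid))) i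
      rw [ContinuousLinearEquiv.apply_symm_apply] at h1
      have h2 : (WithLp.ofLp (s - mid)) i = s i - (a i + b i) / 2 := rfl
      rw [h2] at h1
      have h3 := hs i
      have h4 := h3.1
      have h5 := h3.2
      set z := Dg.symm (WithLp.ofLp (s - mid)) i
      have := hab i
      rw [Real.norm_eq_abs, abs_lt]
      constructor <;> nlinarith
    · rw [vadd_eq_add, hval, ContinuousLinearEquiv.apply_symm_apply]
      simp
  · intro hx
    obtain ⟨_, ⟨y, hy, rfl⟩, rfl⟩ := mem_vadd_set.1 hx
    refine ⟨WithLp.toLp 2 (Dg y) + mid, ?_, (hval y).symm⟩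
    intro i
    have h2 : (WithLp.toLp 2 (Dg y) + mid) i = (b i - a i) / 2 * y i + (a i + b i) / 2 := rfl
    rw [mem_ball_zero_iff, pi_norm_lt_iff one_pos] at hy
    have h3 := hy i
    rw [Real.norm_eq_abs, abs_lt] at h3
    have := hab i
    rw [h2]
    constructor <;> nlinarith [h3.1, h3.2]

theorem aux_img (L : (Fin n → ℝ) ≃L[ℝ] EuclideanSpace ℝ (Fin n)) (c : Fin n → ℝ) (r : ℝ)
    (hr : 0 < r) : L '' Metric.ball c r = L c +ᵥ r • L '' Metric.ball 0 1 := by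
  rw [← affinity_unitBall hr c]
  ext x
  constructor
  · rintro ⟨_, hy, rfl⟩
    obtain ⟨_, hz, rfl⟩ := mem_vadd_set.1 hy
    obtain ⟨w, hw, rfl⟩ := mem_smul_set.1 hz
    exact mem_vadd_set.2 ⟨_, mem_smul_set.2 ⟨L w, ⟨w, hw, rfl⟩, rfl⟩, by simp⟩
  · intro hx
    obtain ⟨_, hz, rfl⟩ := mem_vadd_set.1 hx
    obtain ⟨_, ⟨w, hw, rfl⟩, rfl⟩ := mem_smul_set.1 hz
    exact ⟨c +ᵥ r • w, vadd_mem_vadd_set (smul_mem_smul_set hw), by simp⟩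

variable (𝔊 : Set (Set (EuclideanSpace ℝ (Fin n)))) (hG : ∀ R ∈ 𝔊, IsRect R)
    (hhom : HomothecyInvariant 𝔊) (μ : Measure (EuclideanSpace ℝ (Fin n)))

/-- The halo operator. -/
def auxHalo (γ : ℝ) (A : Set (EuclideanSpace ℝ (Fin n))) : Set (EuclideanSpace ℝ (Fin n)) :=
  {x | ENNReal.ofReal γ < maxOp μ 𝔊 (A.indicator 1) x}

/-- Iterated halos. -/
def auxIter (γ : ℝ) (A : Set (EuclideanSpace ℝ (Fin n))) : ℕ → Set (EuclideanSpace ℝ (Fin n))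
  | 0 => A
  | k + 1 => auxHalo 𝔊 μ γ (auxIter γ A k)

theorem aux_rect_img (hhom : HomothecyInvariant 𝔊)
    (L : (Fin n → ℝ) ≃L[ℝ] EuclideanSpace ℝ (Fin n)) (v : EuclideanSpace ℝ (Fin n))
    (hR : v +ᵥ L '' Metric.ball 0 1 ∈ 𝔊) (c : Fin n → ℝ) (r : ℝ) (hr : 0 < r) :
    L '' Metric.ball c r ∈ 𝔊 := by
  have h1 := (hhom _ hR).1 (-v)
  rw [neg_vadd_vadd] at h1
  rw [aux_img L c r hr]
  exact (hhom _ ((hhom _ h1).2 r hr)).1 _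

theorem aux_rect_eq (L : (Fin n → ℝ) ≃L[ℝ] EuclideanSpace ℝ (Fin n))
    (v : EuclideanSpace ℝ (Fin n)) :
    v +ᵥ L '' Metric.ball 0 1 = L '' Metric.ball (L.symm v) 1 := by
  rw [aux_img L (L.symm v) 1 one_pos, one_smul, ContinuousLinearEquiv.apply_symm_apply]

theorem aux_rect_open {R : Set (EuclideanSpace ℝ (Fin n))} (hR : IsRect R) : IsOpen R := by
  obtain ⟨L, v, rfl⟩ := aux_rect hR
  rw [aux_rect_eq]
  exact L.toHomeomorph.isOpenMap _ Metric.isOpen_ball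

theorem aux_rect_fin [IsLocallyFiniteMeasure μ] {R : Set (EuclideanSpace ℝ (Fin n))}
    (hR : IsRect R) : μ R ≠ ⊤ := by
  obtain ⟨L, v, rfl⟩ := aux_rect hR
  rw [aux_rect_eq]
  refine measure_ne_top_of_subset (image_mono Metric.ball_subset_closedBall) ?_
  exact ((isCompact_closedBall _ _).image L.continuous).measure_lt_top.ne

/-- A rectangle in which `A` has density larger than `γ` lies in the halo. -/
theorem aux_halo_sub [IsLocallyFiniteMeasure μ] (hG : ∀ R ∈ 𝔊, IsRect R)
    (γ g : ℝ) (hγ : 0 < γ) (hγg : γ ≤ g)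
    (A : Set (EuclideanSpace ℝ (Fin n))) (hA : MeasurableSet A)
    (R : Set (EuclideanSpace ℝ (Fin n))) (hR : R ∈ 𝔊)
    (h : g * μ.real R < μ.real (A ∩ R)) : R ⊆ auxHalo 𝔊 μ γ A := by
  intro x hx
  have hfin := aux_rect_fin μ (hG R hR)
  have hpos : 0 < μ.real R := by
    have h0 : 0 ≤ g * μ.real R := mul_nonneg (hγ.le.trans hγg) measureReal_nonneg
    exact (h0.trans_lt h).trans_le (measureReal_mono inter_subset_right hfin)
  have hpos' : 0 < μ R := by
    have := ENNReal.ofReal_pos.2 hpos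
    rwa [ofReal_measureReal hfin] at this
  refine (aux_lt_maxOp μ 𝔊).2 ⟨R, hR, hx, hpos', ?_⟩
  rw [aux_ind μ A hA, ENNReal.lt_div_iff_mul_lt (Or.inl hpos'.ne') (Or.inl hfin),
    ← ofReal_measureReal hfin,
    ← ofReal_measureReal (measure_ne_top_of_subset inter_subset_right hfin),
    ← ENNReal.ofReal_mul hγ.le]
  refine (ENNReal.ofReal_lt_ofReal_iff' ).2 ⟨?_, ?_⟩
  · nlinarith
  · nlinarith [mul_nonneg (hγ.le.trans hγg) hpos.le]

theorem aux_step [IsLocallyFiniteMeasure μ] (hμ : μ ≠ 0) (hG : ∀ R ∈ 𝔊, IsRect R)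
    (hhom : HomothecyInvariant 𝔊)
    (Δ : ℝ) (hΔ : 1 < Δ) (hdbl : DoublingWrt μ 𝔊 Δ) (γ g : ℝ) (hγ : 0 < γ) (hγg : γ < g)
    (hg1 : g < 1) (A : Set (EuclideanSpace ℝ (Fin n))) (hA : MeasurableSet A)
    (R : Set (EuclideanSpace ℝ (Fin n))) (hR : R ∈ 𝔊) :
    0 < μ.real R ∧ (μ.real (A ∩ R) ≤ g * μ.real R →
    (1 + (1 - g) / (Δ * Δ * Δ)) * μ.real (A ∩ R) ≤ μ.real (auxHalo 𝔊 μ γ A ∩ R)) := by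
  obtain ⟨L, v, hRv⟩ := aux_rect (hG R hR)
  have hmem := aux_rect_img 𝔊 hhom L v (hRv ▸ hR)
  have hRv' : R = L '' Metric.ball (L.symm v) 1 := by rw [hRv, aux_rect_eq]
  set ν : Measure (Fin n → ℝ) := μ.map L.symm.toHomeomorph with hν
  have hpre : ∀ s : Set (Fin n → ℝ), L.symm.toHomeomorph ⁻¹' s = L '' s := by
    intro s
    ext x
    constructor
    · intro hx
      exact ⟨L.symm x, hx, by simp⟩
    · rintro ⟨y, hy, rfl⟩
      simpa using hy
  have hνs : ∀ s : Set (Fin n → ℝ), ν s = μ (L '' s) := by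
    intro s
    rw [hν, ← hpre]
    exact L.symm.toHomeomorph.toMeasurableEquiv.map_apply s
  have hνr : ∀ s : Set (Fin n → ℝ), ν.real s = μ.real (L '' s) := by
    intro s; simp only [Measure.real, hνs]
  have : IsFiniteMeasureOnCompacts ν := MeasureTheory.Measure.IsFiniteMeasureOnCompacts.map μ L.symm.toHomeomorph
  have : IsLocallyFiniteMeasure ν := isLocallyFiniteMeasure_of_isFiniteMeasureOnCompacts
  have hD' : ∀ x y : Fin n → ℝ, ∀ r : ℝ, 0 < r → Metric.ball y r ⊆ Metric.ball x (2 * r) →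
      ν (Metric.ball x (2 * r)) ≤ ENNReal.ofReal Δ * ν (Metric.ball y r) := by
    intro x y r hr hsub
    have e : L '' Metric.ball x (2 * r) = (L x - (2 : ℝ) • L y) +ᵥ (2 : ℝ) • L '' Metric.ball y r := by
      rw [aux_img L x (2 * r) (by linarith), aux_img L y r hr]
      ext z
      simp only [mem_vadd_set, mem_smul_set, vadd_eq_add, exists_exists_and_eq_and]
      refine exists_congr fun w => and_congr_right fun _ => ?_
      have : (L x - (2 : ℝ) • L y) + (2 : ℝ) • (L y + r • w) = L x + (2 * r) • w := by module
      rw [this]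
    have h := hdbl _ (hmem y r hr) (L x - (2 : ℝ) • L y) (by
      rw [← e]; exact image_mono hsub)
    rw [← e] at h
    rwa [hνs, hνs]
  have hD : ∀ x y : Fin n → ℝ, ∀ r : ℝ, 0 < r → Metric.ball y r ⊆ Metric.ball x (2 * r) →
      ν.real (Metric.ball x (2 * r)) ≤ Δ * ν.real (Metric.ball y r) := by
    intro x y r hr hsub
    have h := ENNReal.toReal_mono (ENNReal.mul_ne_top ENNReal.ofReal_ne_top (aux_ball_fin ν y r))
      (hD' x y r hr hsub)
    rwa [ENNReal.toReal_mul, ENNReal.toReal_ofReal (by linarith)] at h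
  have hν0 : ν ≠ 0 := by
    intro h
    apply hμ
    rw [← Measure.measure_univ_eq_zero] at h ⊢
    rw [hνs, image_univ, L.surjective.range_eq] at h
    exact h
  have hpos : ∀ x : Fin n → ℝ, ∀ r : ℝ, 0 < r → 0 < ν.real (Metric.ball x r) := by
    intro x r hr
    by_contra hcon
    have h0 : ν.real (Metric.ball x r) = 0 := le_antisymm (not_lt.1 hcon) measureReal_nonneg
    have h1 : ∀ k : ℕ, ν.real (Metric.ball x (2 ^ k * r)) = 0 := by
      intro k
      induction k with
      | zero => simpa using h0
      | succ k ih =>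
        have hk : 0 < 2 ^ k * r := by positivity
        have := hD x x (2 ^ k * r) hk (Metric.ball_subset_ball (by linarith))
        rw [ih, mul_zero] at this
        rw [show (2 : ℝ) ^ (k + 1) * r = 2 * (2 ^ k * r) by ring]
        exact le_antisymm this measureReal_nonneg
    apply hν0
    rw [← Measure.measure_univ_eq_zero]
    have hun : (⋃ k : ℕ, Metric.ball x (2 ^ k * r)) = univ := by
      rw [eq_univ_iff_forall]
      intro y
      obtain ⟨k, hk⟩ := pow_unbounded_of_one_lt (dist y x / r) (one_lt_two)
      exact mem_iUnion.2 ⟨k, by rw [Metric.mem_ball]; exact (div_lt_iff₀ hr).1 hk⟩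
    rw [← hun, measure_iUnion_null_iff]
    intro k
    exact (measureReal_eq_zero_iff (aux_ball_fin ν _ _)).1 (h1 k)
  have hinter : ∀ (B : Set (EuclideanSpace ℝ (Fin n))) (c : Fin n → ℝ) (r : ℝ),
      ν.real (L ⁻¹' B ∩ Metric.ball c r) = μ.real (B ∩ L '' Metric.ball c r) := by
    intro B c r
    rw [hνr, inter_comm, image_inter_preimage, inter_comm]
  refine ⟨?_, ?_⟩
  · rw [hRv', ← hνr]; exact hpos _ _ one_pos
  intro hlow
  have hgr := aux_growth ν Δ hD (by linarith) hpos g (by linarith) hg1 (L ⁻¹' A)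
    (L.continuous.measurable hA) (L.symm v) 1 one_pos (by
      rw [hinter, hνr, ← hRv']; exact hlow) (L ⁻¹' auxHalo 𝔊 μ γ A) (by
      intro y s hs heq
      rw [hinter, hνr] at heq
      rw [← image_subset_iff]
      refine aux_halo_sub 𝔊 μ hG γ γ hγ le_rfl A hA _ (hmem y s hs) ?_
      rw [heq]
      have := hpos y s hs
      rw [hνr] at this
      exact mul_lt_mul_of_pos_right hγg this)
  rwa [hinter, hinter, ← hRv'] at hgr

theorem aux_tauber [IsLocallyFiniteMeasure μ] (hμ : μ ≠ 0) (hG : ∀ R ∈ 𝔊, IsRect R)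
    (hhom : HomothecyInvariant 𝔊)
    (Δ : ℝ) (hΔ : 1 < Δ) (hdbl : DoublingWrt μ 𝔊 Δ) (γ c : ℝ) (hγ : 0 < γ) (hγ1 : γ < 1)
    (hT : TauberianCond μ μ 𝔊 γ c) :
    ∃ K : ℕ, ∀ (j : ℕ) (E : Set (EuclideanSpace ℝ (Fin n))), MeasurableSet E →
      μ {x | ((4 : ℝ≥0∞)⁻¹) ^ (j + 1) < maxOp μ 𝔊 (E.indicator 1) x} ≤
        ENNReal.ofReal c ^ (K + 1) * (ENNReal.ofReal c ^ K) ^ j * μ E := by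
  obtain ⟨g, hγg, hg1⟩ := exists_between hγ1
  set δ : ℝ := (1 - g) / (Δ * Δ * Δ) with hδ
  have hδ0 : 0 < δ := div_pos (by linarith) (by positivity)
  obtain ⟨K, hK⟩ := pow_unbounded_of_one_lt (4 : ℝ) (by linarith : 1 < 1 + δ)
  refine ⟨K, fun j E hE => ?_⟩
  have ho : ∀ B ∈ 𝔊, IsOpen B := fun B hB => aux_rect_open (hG B hB)
  have hmeas : ∀ k, MeasurableSet (auxIter 𝔊 μ γ E k) := by
    intro k
    cases k with
    | zero => exact hE
    | succ k => exact (aux_open μ 𝔊 ho _ _).measurableSet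
  have hbound : ∀ k, μ (auxIter 𝔊 μ γ E k) ≤ ENNReal.ofReal c ^ k * μ E := by
    intro k
    induction k with
    | zero => simp [auxIter]
    | succ k ih =>
      calc μ (auxIter 𝔊 μ γ E (k + 1)) ≤ ENNReal.ofReal c * μ (auxIter 𝔊 μ γ E k) :=
            hT _ (hmeas k)
        _ ≤ ENNReal.ofReal c * (ENNReal.ofReal c ^ k * μ E) := by gcongr
        _ = _ := by rw [pow_succ]; ring
  have hsub : {x | ((4 : ℝ≥0∞)⁻¹) ^ (j + 1) < maxOp μ 𝔊 (E.indicator 1) x} ⊆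
      auxIter 𝔊 μ γ E (K * (j + 1) + 1) := by
    intro x hx
    obtain ⟨R, hR, hxR, hpos, hlt⟩ := (aux_lt_maxOp μ 𝔊).1 hx
    have hfin := aux_rect_fin μ (hG R hR)
    rw [aux_ind μ E hE, ENNReal.lt_div_iff_mul_lt (Or.inl hpos.ne') (Or.inl hfin)] at hlt
    have hlt' : (1 / 4) ^ (j + 1) * μ.real R < μ.real (E ∩ R) := by
      have := (ENNReal.toReal_lt_toReal (ENNReal.mul_ne_top (by simp) hfin)
        (measure_ne_top_of_subset inter_subset_right hfin)).2 hlt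
      simpa [Measure.real] using this
    have hR0 : 0 < μ.real R := (aux_step 𝔊 μ hμ hG hhom Δ hΔ hdbl γ g hγ hγg hg1 E hE R hR).1
    have hind : ∀ k, g * μ.real R < μ.real (auxIter 𝔊 μ γ E k ∩ R) ∨
        (1 + δ) ^ k * ((1 / 4) ^ (j + 1) * μ.real R) < μ.real (auxIter 𝔊 μ γ E k ∩ R) := by
      intro k
      induction k with
      | zero => right; simpa [auxIter] using hlt'
      | succ k ih =>
        by_cases hden : g * μ.real R < μ.real (auxIter 𝔊 μ γ E k ∩ R)
        · left
          have hs : R ⊆ auxIter 𝔊 μ γ E (k + 1) :=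
            aux_halo_sub 𝔊 μ hG γ g hγ hγg.le _ (hmeas k) R hR hden
          rw [inter_eq_self_of_subset_right hs]
          nlinarith
        · right
          have ih := ih.resolve_left hden
          have := (aux_step 𝔊 μ hμ hG hhom Δ hΔ hdbl γ g hγ hγg hg1 _ (hmeas k) R hR).2
            (not_lt.1 hden)
          refine lt_of_lt_of_le ?_ this
          rw [pow_succ, mul_comm ((1 + δ) ^ k), mul_assoc]
          exact mul_lt_mul_of_pos_left ih (by linarith)
    have hfinal : g * μ.real R < μ.real (auxIter 𝔊 μ γ E (K * (j + 1)) ∩ R) := by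
      rcases hind (K * (j + 1)) with h | h
      · exact h
      · have h1 : (1 : ℝ) ≤ (1 + δ) ^ (K * (j + 1)) * (1 / 4) ^ (j + 1) := by
          rw [pow_mul, ← mul_pow]
          exact one_le_pow₀ (by linarith)
        rw [← mul_assoc] at h
        nlinarith
    exact aux_halo_sub 𝔊 μ hG γ g hγ hγg.le _ (hmeas _) R hR hfinal hxR
  calc _ ≤ _ := measure_mono hsub
    _ ≤ _ := hbound _
    _ = _ := by congr 1; ring

theorem aux_converse (hG : ∀ R ∈ 𝔊, IsRect R) (p : ℝ) (hp : 0 < p)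
    (h : BoundedOnLp μ μ 𝔊 p) :
    ∃ γ ∈ Set.Ioo (0 : ℝ) 1, ∃ c : ℝ, 0 < c ∧ TauberianCond μ μ 𝔊 γ c := by
  obtain ⟨C, hC, hb⟩ := h
  have ho : ∀ B ∈ 𝔊, IsOpen B := fun B hB => aux_rect_open (hG B hB)
  set ε : ℝ≥0∞ := ENNReal.ofReal (1 / 2) ^ p with hε
  have hε0 : ε ≠ 0 := (ENNReal.rpow_pos (by simp) (by simp)).ne'
  have hεt : ε ≠ ⊤ := ENNReal.rpow_ne_top_of_nonneg hp.le (by simp)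
  have hCt : C / ε ≠ ⊤ := ENNReal.div_ne_top hC hε0
  refine ⟨1 / 2, ⟨by norm_num, by norm_num⟩, (C / ε).toReal + 1, by positivity, ?_⟩
  intro E hE
  have h1 := hb (E.indicator 1) (measurable_one.indicator hE)
  have h2 : ∫⁻ x, ENNReal.ofReal |E.indicator (1 : EuclideanSpace ℝ (Fin n) → ℝ) x| ^ p ∂μ = μ E := by
    rw [← lintegral_indicator_one hE]
    congr 1; ext x
    by_cases hx : x ∈ E <;> simp [hx, hp]
  rw [h2] at h1
  set S := {x | ENNReal.ofReal (1 / 2) < maxOp μ 𝔊 (E.indicator 1) x} with hS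
  have hSm : MeasurableSet S := (aux_open μ 𝔊 ho _ _).measurableSet
  have h3 : ε * μ S ≤ ∫⁻ x, maxOp μ 𝔊 (E.indicator 1) x ^ p ∂μ := by
    rw [← lintegral_indicator_const hSm]
    refine lintegral_mono fun x => ?_
    by_cases hx : x ∈ S
    · rw [indicator_of_mem hx]
      exact ENNReal.rpow_le_rpow (le_of_lt hx) hp.le
    · simp [indicator_of_notMem hx]
  calc μ S ≤ (C * μ E) / ε := by
        rw [ENNReal.le_div_iff_mul_le (Or.inl hε0) (Or.inl hεt), mul_comm]
        exact h3.trans h1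
    _ = C / ε * μ E := by rw [div_eq_mul_inv, div_eq_mul_inv]; ring
    _ ≤ _ := by
        gcongr
        rw [ENNReal.le_ofReal_iff_toReal_le hCt (by positivity)]
        linarith

end Glue

/-- For a homothecy invariant collection `𝔊` of open rectangles and a
nonzero locally finite Borel measure `μ` doubling w.r.t. `𝔊`: the Tauberian condition at
some fixed level `γ ∈ (0,1)` for `M_{𝔊,μ}` w.r.t. `μ` itself holds iff there is `p₀ > 1`
such that `M_{𝔊,μ}` is bounded on `L^p(μ)` for all `p > p₀`. -/
theorem statement6 (n : ℕ) (𝔊 : Set (Set (EuclideanSpace ℝ (Fin n))))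
    (hG : ∀ R ∈ 𝔊, IsRect R) (hhom : HomothecyInvariant 𝔊)
    (μ : Measure (EuclideanSpace ℝ (Fin n)))
    (hloc : IsLocallyFiniteMeasure μ) (hμ : μ ≠ 0)
    (hdbl : ∃ Δ : ℝ, 1 < Δ ∧ DoublingWrt μ 𝔊 Δ) :
    (∃ γ ∈ Set.Ioo (0 : ℝ) 1, ∃ c : ℝ, 0 < c ∧ TauberianCond μ μ 𝔊 γ c)
    ↔ (∃ p₀ : ℝ, 1 < p₀ ∧ ∀ p : ℝ, p₀ < p → BoundedOnLp μ μ 𝔊 p) := by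
  constructor
  · rintro ⟨γ, hγ, c, hc, hT⟩
    obtain ⟨Δ, hΔ, hd⟩ := hdbl
    obtain ⟨K, hK⟩ := aux_tauber 𝔊 μ hμ hG hhom Δ hΔ hd γ c hγ.1 hγ.2 hT
    obtain ⟨N, hN⟩ := pow_unbounded_of_one_lt (c ^ K) (one_lt_two)
    refine ⟨N + 2, by
      have : (0 : ℝ) ≤ N := Nat.cast_nonneg N
      linarith, fun p hp => ?_⟩
    have hN0 : (0 : ℝ) ≤ N := Nat.cast_nonneg N
    refine aux_interp μ 𝔊 (fun B hB => aux_rect_open (hG B hB)) _ _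
      (ENNReal.pow_ne_top ENNReal.ofReal_ne_top) hK p (by linarith) ?_
    calc ENNReal.ofReal c ^ K = ENNReal.ofReal (c ^ K) := (ENNReal.ofReal_pow hc.le K).symm
      _ < ENNReal.ofReal (2 ^ N) := (ENNReal.ofReal_lt_ofReal_iff (by positivity)).2 hN
      _ = (2 : ℝ≥0∞) ^ (N : ℝ) := by
          rw [ENNReal.ofReal_pow (by norm_num), ENNReal.rpow_natCast]; simp
      _ ≤ 2 ^ p := ENNReal.rpow_le_rpow_of_exponent_le (by norm_num) (by linarith)
  · rintro ⟨p₀, h1, h⟩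
    exact aux_converse 𝔊 μ hG (p₀ + 1) (by linarith) (h _ (by linarith))
end

section
/- Let μ be a nonzero locally finite nonnegative Borel measure on ℝⁿ which is doubling, with constant δ_μ, with respect to the family 𝔎 of all homothetic copies of a fixed rectangle R₀. Then the maximal operator M_{𝔎,μ} is of weak type (1,1) with respect to μ and bounded on L^p(μ) for every 1 < p ≤ ∞, with operator norms depending only on δ_μ, p and n; that is, there exists C = C(δ_μ, n) such that μ({x : M_{𝔎,μ}f(x) > λ}) ≤ (C/λ)‖f‖_{L¹(μ)} for all f ∈ L¹(μ) and λ > 0, and for each p > 1 there is C_p = C(δ_μ, n, p) with ‖M_{𝔎,μ}f‖_{L^p(μ)} ≤ C_p‖f‖_{L^p(μ)}. -/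
open MeasureTheory Set Filter
open scoped ENNReal Topology Pointwise

section Helpers12

variable {n : ℕ}

local notation "𝔼" => EuclideanSpace ℝ (Fin n)

/-- An open, convex, centrally symmetric bounded body. -/
def SymBody (D : Set (EuclideanSpace ℝ (Fin n))) : Prop :=
  IsOpen D ∧ Convex ℝ D ∧ (∀ x ∈ D, -x ∈ D) ∧ (0 : EuclideanSpace ℝ (Fin n)) ∈ D ∧
    Bornology.IsBounded D

lemma isRect_symBody {R : Set 𝔼} (hR : IsRect R) :
    ∃ (c : 𝔼) (D : Set 𝔼), SymBody D ∧ R = c +ᵥ D := by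
  obtain ⟨f, S, ⟨a, b, hab, rfl⟩, rfl⟩ := hR
  set S : Set 𝔼 := {x | ∀ i, x i ∈ Set.Ioo (a i) (b i)} with hS
  set c0 : 𝔼 := WithLp.toLp 2 (fun i => (a i + b i) / 2) with hc0
  set A := f.toRealAffineIsometryEquiv with hA
  have hAf : ∀ x, A x = f x := fun x => by simp [hA]
  have hSopen : IsOpen S := by
    have : S = ⋂ i, (fun x : 𝔼 => x i) ⁻¹' Set.Ioo (a i) (b i) := by
      ext x; simp [hS]
    rw [this]
    exact isOpen_iInter_of_finite fun i => isOpen_Ioo.preimage (by fun_prop)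
  have hSconv : Convex ℝ S := by
    intro x hx y hy α β hα hβ hαβ i
    exact (convex_Ioo (a i) (b i)) (hx i) (hy i) hα hβ hαβ
  have hSbdd : Bornology.IsBounded S := by
    have hK : IsCompact ((WithLp.toLp 2) '' (Set.univ.pi fun i => Set.Icc (a i) (b i)) : Set 𝔼) :=
      (isCompact_univ_pi fun i => isCompact_Icc).image (PiLp.continuous_toLp 2 _)
    refine hK.isBounded.subset ?_
    intro x hx
    exact ⟨WithLp.ofLp x, fun i _ => ⟨(hx i).1.le, (hx i).2.le⟩, rfl⟩
  have hc0S : c0 ∈ S := by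
    intro i
    have := hab i
    simp only [hc0]
    constructor <;> linarith
  have hsym : ∀ x ∈ S, AffineMap.lineMap x c0 (2 : ℝ) ∈ S := by
    intro x hx i
    have h1 := hx i
    simp only [AffineMap.lineMap_apply_module, hc0, PiLp.add_apply, PiLp.smul_apply, smul_eq_mul,
      Set.mem_Ioo] at h1 ⊢
    constructor <;> linarith [h1.1, h1.2]
  refine ⟨f c0, -(f c0) +ᵥ (f '' S), ⟨?_, ?_, ?_, ?_, ?_⟩, by simp⟩
  · exact (f.toHomeomorph.isOpenMap S hSopen).vadd _
  · apply Convex.vadd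
    have := hSconv.affine_image (A.toAffineEquiv.toAffineMap)
    have e : f '' S = (A.toAffineEquiv.toAffineMap : 𝔼 → 𝔼) '' S := Set.image_congr fun x _ => (hAf x).symm
    rw [e]; exact this
  · rintro x ⟨_, ⟨y, hy, rfl⟩, rfl⟩
    refine ⟨_, ⟨_, hsym y hy, rfl⟩, ?_⟩
    have : f (AffineMap.lineMap y c0 (2:ℝ)) = AffineMap.lineMap (f y) (f c0) (2:ℝ) := by
      have := A.toAffineEquiv.toAffineMap.apply_lineMap y c0 (2:ℝ)
      calc _ = A (AffineMap.lineMap y c0 (2:ℝ)) := (hAf _).symm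
        _ = AffineMap.lineMap (A y) (A c0) (2:ℝ) := this
        _ = _ := by rw [hAf, hAf]
    rw [this]
    simp only [AffineMap.lineMap_apply_module, vadd_eq_add]
    module
  · exact ⟨f c0, ⟨c0, hc0S, rfl⟩, by simp⟩
  · have : Bornology.IsBounded (f '' S) := f.isometry.lipschitz.isBounded_image hSbdd
    exact this.vadd _

lemma SymBody.comb {D : Set 𝔼} (hD : SymBody D) {x y : 𝔼} (hx : x ∈ D) (hy : y ∈ D)
    {α β : ℝ} (hα : 0 ≤ α) (hβ : 0 ≤ β) (h : α + β ≤ 1) : α • x + β • y ∈ D := by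
  have hz := hD.2.2.2.1
  rcases eq_or_lt_of_le (add_nonneg hα hβ) with h0 | h0
  · have h1 : α = 0 := by linarith
    have h2 : β = 0 := by linarith
    simpa [h1, h2] using hz
  have hm : (α / (α + β)) • x + (β / (α + β)) • y ∈ D :=
    hD.2.1 hx hy (by positivity) (by positivity) (by field_simp)
  have := hD.2.1.smul_mem_of_zero_mem hz hm ⟨h0.le, h⟩
  rw [smul_add, smul_smul, smul_smul, mul_div_cancel₀ _ h0.ne', mul_div_cancel₀ _ h0.ne'] at this
  exact this

lemma SymBody.engulf {D : Set 𝔼} (hD : SymBody D) {za zb : 𝔼} {sa sb : ℝ} (ha : 0 < sa)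
    (hb : 0 < sb) (hab : sa ≤ 2 * sb)
    (hne : ((za +ᵥ sa • D) ∩ (zb +ᵥ sb • D)).Nonempty) :
    za +ᵥ sa • D ⊆ zb +ᵥ (8 * sb) • D := by
  obtain ⟨y, ⟨_, ⟨d2, hd2, rfl⟩, h2⟩, ⟨_, ⟨d3, hd3, rfl⟩, h3⟩⟩ := hne
  rintro _ ⟨_, ⟨d1, hd1, rfl⟩, rfl⟩
  simp only [vadd_eq_add] at h2 h3 ⊢
  have hm1 : (1/2 : ℝ) • d1 + (1/2 : ℝ) • (-d2) ∈ D :=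
    hD.comb hd1 (hD.2.2.1 _ hd2) (by norm_num) (by norm_num) (by norm_num)
  have hm2 : (sa / (4 * sb)) • ((1/2 : ℝ) • d1 + (1/2 : ℝ) • (-d2)) + (1/8 : ℝ) • d3 ∈ D := by
    refine hD.comb hm1 hd3 (by positivity) (by norm_num) ?_
    have : sa / (4 * sb) ≤ 1/2 := by
      rw [div_le_iff₀ (by positivity)]; linarith
    linarith
  refine ⟨_, ⟨_, hm2, rfl⟩, ?_⟩
  have h4 : za = zb + sb • d3 - sa • d2 := by rw [h3, ← h2]; abel
  rw [h4]
  simp only [vadd_eq_add, smul_add, smul_smul, smul_neg]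
  rw [show 8 * sb * (sa / (4 * sb) * (1 / 2)) = sa by field_simp; norm_num,
    show 8 * sb * (1/8) = sb by ring]
  abel

lemma mem_homCopies {c : 𝔼} {D B : Set 𝔼} :
    B ∈ homCopies (c +ᵥ D) ↔ ∃ (z : 𝔼) (s : ℝ), 0 < s ∧ B = z +ᵥ s • D := by
  have key : ∀ (y : 𝔼) (s : ℝ), y +ᵥ s • (c +ᵥ D) = (y + s • c) +ᵥ s • D := by
    intro y s
    ext x
    simp only [Set.mem_vadd_set, Set.mem_smul_set, vadd_eq_add]
    constructor
    · rintro ⟨_, ⟨_, ⟨d, hd, rfl⟩, rfl⟩, rfl⟩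
      exact ⟨_, ⟨d, hd, rfl⟩, by rw [smul_add]; abel⟩
    · rintro ⟨_, ⟨d, hd, rfl⟩, rfl⟩
      exact ⟨_, ⟨_, ⟨d, hd, rfl⟩, rfl⟩, by rw [smul_add]; abel⟩
  constructor
  · rintro ⟨y, s, hs, rfl⟩
    exact ⟨_, s, hs, key y s⟩
  · rintro ⟨z, s, hs, rfl⟩
    exact ⟨z - s • c, s, hs, by rw [key]; simp⟩

lemma doubling_one {c : 𝔼} {D : Set 𝔼} (hD : SymBody D) {μ : Measure 𝔼} {δ : ℝ}
    (h : DoublingWrt μ (homCopies (c +ᵥ D)) δ) (z : 𝔼) {s : ℝ} (hs : 0 < s) :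
    μ (z +ᵥ (2 * s) • D) ≤ ENNReal.ofReal δ * μ (z +ᵥ s • D) := by
  have key : -z +ᵥ (2:ℝ) • (z +ᵥ s • D) = z +ᵥ (2 * s) • D := by
    ext x
    simp only [Set.mem_vadd_set, Set.mem_smul_set, vadd_eq_add]
    constructor
    · rintro ⟨_, ⟨_, ⟨_, ⟨d, hd, rfl⟩, rfl⟩, rfl⟩, rfl⟩
      exact ⟨_, ⟨d, hd, rfl⟩, by module⟩
    · rintro ⟨_, ⟨d, hd, rfl⟩, rfl⟩
      exact ⟨_, ⟨_, ⟨_, ⟨d, hd, rfl⟩, rfl⟩, rfl⟩, by module⟩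
  have := h (z +ᵥ s • D) (mem_homCopies.2 ⟨z, s, hs, rfl⟩) (-z) (by
    rw [key]
    apply Set.vadd_set_mono
    rintro _ ⟨d, hd, rfl⟩
    refine ⟨(1/2 : ℝ) • d, hD.2.1.smul_mem_of_zero_mem hD.2.2.2.1 hd ⟨by norm_num, by norm_num⟩, ?_⟩
    simp only [smul_smul]
    congr 1; ring)
  rwa [key] at this

lemma doubling_eight {c : 𝔼} {D : Set 𝔼} (hD : SymBody D) {μ : Measure 𝔼} {δ : ℝ}
    (h : DoublingWrt μ (homCopies (c +ᵥ D)) δ) (z : 𝔼) {s : ℝ} (hs : 0 < s) :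
    μ (z +ᵥ (8 * s) • D) ≤ ENNReal.ofReal δ ^ 3 * μ (z +ᵥ s • D) := by
  have h1 := doubling_one hD h z hs
  have h2 := doubling_one hD h z (s := 2 * s) (by positivity)
  have h3 := doubling_one hD h z (s := 2 * (2 * s)) (by positivity)
  rw [show 8 * s = 2 * (2 * (2 * s)) by ring]
  calc _ ≤ _ := h3
    _ ≤ ENNReal.ofReal δ * (ENNReal.ofReal δ * (ENNReal.ofReal δ * μ (z +ᵥ s • D))) := by
      gcongr; exact h2.trans (by gcongr)
    _ = _ := by ring

lemma SymBody.isOpen_copy {D : Set 𝔼} (hD : SymBody D) (z : 𝔼) {s : ℝ} (hs : 0 < s) :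
    IsOpen (z +ᵥ s • D) := (hD.1.smul₀ hs.ne').vadd z

lemma isOpen_superlevel {μ : Measure 𝔼} {𝔅 : Set (Set 𝔼)} (h𝔅 : ∀ B ∈ 𝔅, IsOpen B)
    (f : 𝔼 → ℝ) (a : ℝ≥0∞) : IsOpen {x | a < maxOp μ 𝔅 f x} := by
  rw [isOpen_iff_mem_nhds]
  intro x hx
  simp only [maxOp, Set.mem_ofPred_eq, lt_iSup_iff] at hx
  obtain ⟨B, hB, hxB, hμB, hlt⟩ := hx
  filter_upwards [(h𝔅 B hB).mem_nhds hxB] with y hy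
  simp only [maxOp, Set.mem_ofPred_eq, lt_iSup_iff]
  exact ⟨B, hB, hy, hμB, hlt⟩

lemma weak_type {c : 𝔼} {D : Set 𝔼} (hD : SymBody D) {μ : Measure 𝔼} [IsLocallyFiniteMeasure μ]
    {δ : ℝ} (h : DoublingWrt μ (homCopies (c +ᵥ D)) δ) (f : 𝔼 → ℝ) {lam : ℝ} (hlam : 0 < lam) :
    μ {x | ENNReal.ofReal lam < maxOp μ (homCopies (c +ᵥ D)) f x}
      ≤ ENNReal.ofReal δ ^ 3 * (∫⁻ x, ENNReal.ofReal |f x| ∂μ) / ENNReal.ofReal lam := by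
  have hopen : ∀ B ∈ homCopies (c +ᵥ D), IsOpen B := by
    intro B hB
    obtain ⟨z, s, hs, rfl⟩ := mem_homCopies.1 hB
    exact hD.isOpen_copy z hs
  have hU := isOpen_superlevel (μ := μ) hopen f (ENNReal.ofReal lam)
  rw [hU.measure_eq_iSup_isCompact]
  refine iSup₂_le fun K hK => iSup_le fun hKc => ?_
  set L : ℝ≥0∞ := ENNReal.ofReal lam with hL
  have hL0 : L ≠ 0 := by simpa [hL] using hlam
  have hLt : L ≠ ⊤ := ENNReal.ofReal_ne_top
  -- a good copy for each point
  have hsel : ∀ x : K, ∃ q : 𝔼 × ℝ, 0 < q.2 ∧ (x : 𝔼) ∈ q.1 +ᵥ q.2 • D ∧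
      L * μ (q.1 +ᵥ q.2 • D) ≤ ∫⁻ y in q.1 +ᵥ q.2 • D, ENNReal.ofReal |f y| ∂μ := by
    rintro ⟨x, hx⟩
    have hx := hK hx
    simp only [maxOp, Set.mem_ofPred_eq, lt_iSup_iff] at hx
    obtain ⟨B, hB, hxB, hμB, hlt⟩ := hx
    obtain ⟨z, s, hs, rfl⟩ := mem_homCopies.1 hB
    refine ⟨(z, s), hs, hxB, ?_⟩
    exact ENNReal.mul_le_of_le_div hlt.le
  choose q hq0 hqx hqm using hsel
  obtain ⟨t, ht⟩ := hKc.elim_finite_subcover (fun x : K => (q x).1 +ᵥ (q x).2 • D)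
    (fun x => hD.isOpen_copy _ (hq0 x)) (fun x hx => Set.mem_iUnion.2 ⟨⟨x, hx⟩, hqx ⟨x, hx⟩⟩)
  obtain ⟨R, hR⟩ : ∃ R : ℝ, ∀ a ∈ (t : Set K), (q a).2 ≤ R := by
    obtain ⟨R, hR⟩ := (t.finite_toSet.image (fun a => (q a).2)).bddAbove
    exact ⟨R, fun a ha => hR ⟨a, ha, rfl⟩⟩
  obtain ⟨u, hut, hdisj, hcov⟩ := Vitali.exists_disjoint_subfamily_covering_enlargement
    (fun x : K => (q x).1 +ᵥ (q x).2 • D) (t : Set K) (fun a => (q a).2) 2 (by norm_num)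
    (fun a _ => (hq0 a).le) R hR (fun a _ => ⟨_, hqx a⟩)
  have hufin : u.Finite := t.finite_toSet.subset hut
  have hucount := hufin.countable
  have hKsub : K ⊆ ⋃ b ∈ u, (q b).1 +ᵥ (8 * (q b).2) • D := by
    intro x hx
    obtain ⟨a, ha, hxa⟩ := Set.mem_iUnion₂.1 (ht hx)
    obtain ⟨b, hb, hne, hle⟩ := hcov a ha
    exact Set.mem_iUnion₂.2 ⟨b, hb, hD.engulf (hq0 a) (hq0 b) hle hne hxa⟩
  rw [ENNReal.le_div_iff_mul_le (Or.inl hL0) (Or.inl hLt)]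
  calc μ K * L ≤ (∑' b : u, μ ((q b).1 +ᵥ (8 * (q b).2) • D)) * L := by
        gcongr
        exact (measure_mono hKsub).trans (measure_biUnion_le μ hucount _)
    _ ≤ (∑' b : u, ENNReal.ofReal δ ^ 3 * μ ((q b).1 +ᵥ (q b).2 • D)) * L := by
        gcongr with b
        exact doubling_eight hD h _ (hq0 b)
    _ = ENNReal.ofReal δ ^ 3 * ∑' b : u, L * μ ((q b).1 +ᵥ (q b).2 • D) := by
        rw [ENNReal.tsum_mul_left, ENNReal.tsum_mul_left]; ring
    _ ≤ ENNReal.ofReal δ ^ 3 *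
        ∑' b : u, ∫⁻ y in (q b).1 +ᵥ (q b).2 • D, ENNReal.ofReal |f y| ∂μ := by
        gcongr with b
        exact hqm b
    _ = ENNReal.ofReal δ ^ 3 *
        ∫⁻ y in ⋃ b ∈ u, (q b).1 +ᵥ (q b).2 • D, ENNReal.ofReal |f y| ∂μ := by
        rw [lintegral_biUnion hucount
          (fun b _ => (hD.isOpen_copy _ (hq0 b)).measurableSet) hdisj]
    _ ≤ _ := by gcongr; exact Measure.restrict_le_self

lemma maxOp_split (μ : Measure 𝔼) (𝔅 : Set (Set 𝔼)) (f g : 𝔼 → ℝ) {a : ℝ}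
    (hfg : ∀ y, |f y| ≤ |g y| + a) (ha : 0 ≤ a) (x : 𝔼) :
    maxOp μ 𝔅 f x ≤ maxOp μ 𝔅 g x + ENNReal.ofReal a := by
  refine iSup_le fun B => iSup_le fun hB => iSup_le fun hx => iSup_le fun hμ => ?_
  calc (∫⁻ y in B, ENNReal.ofReal |f y| ∂μ) / μ B
      ≤ (∫⁻ y in B, (ENNReal.ofReal |g y| + ENNReal.ofReal a) ∂μ) / μ B := by
        gcongr with y
        rw [← ENNReal.ofReal_add (abs_nonneg _) ha]
        exact ENNReal.ofReal_le_ofReal (hfg y)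
    _ = (∫⁻ y in B, ENNReal.ofReal |g y| ∂μ) / μ B + ENNReal.ofReal a * μ B / μ B := by
        rw [lintegral_add_right _ measurable_const, setLIntegral_const, ENNReal.add_div]
    _ ≤ _ := by
        gcongr
        · exact le_iSup_of_le B (le_iSup_of_le hB (le_iSup_of_le hx (le_iSup_of_le hμ le_rfl)))
        · exact ENNReal.div_le_of_le_mul le_rfl

lemma strong_type {c : 𝔼} {D : Set 𝔼} (hD : SymBody D) {μ : Measure 𝔼}
    [IsLocallyFiniteMeasure μ]
    {δ : ℝ} (hδ : 1 < δ) (h : DoublingWrt μ (homCopies (c +ᵥ D)) δ) (f : 𝔼 → ℝ)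
    (hf : Measurable f) {p : ℝ} (hp : 1 < p) :
    ∫⁻ x, maxOp μ (homCopies (c +ᵥ D)) f x ^ p ∂μ
      ≤ ENNReal.ofReal (p * (2 * δ ^ 3) * (p - 1)⁻¹ * 2 ^ (p - 1)) *
        ∫⁻ x, ENNReal.ofReal |f x| ^ p ∂μ := by
  set M := maxOp μ (homCopies (c +ᵥ D)) f with hM
  have hopen : ∀ B ∈ homCopies (c +ᵥ D), IsOpen B := by
    intro B hB
    obtain ⟨z, s, hs, rfl⟩ := mem_homCopies.1 hB
    exact hD.isOpen_copy z hs
  have hMm : Measurable M :=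
    measurable_of_Ioi fun a => (isOpen_superlevel (μ := μ) hopen f a).measurableSet
  set ν : Measure 𝔼 := μ.withDensity (fun x => ENNReal.ofReal |f x|) with hν
  have hfm : Measurable fun x => ENNReal.ofReal |f x| := by fun_prop
  -- level set estimate
  have hlev : ∀ t : ℝ, 0 < t → μ {x | ENNReal.ofReal t < M x} ≤
      ENNReal.ofReal (2 * δ ^ 3 / t) * ν {x | t < 2 * |f x|} := by
    intro t ht
    set E : Set 𝔼 := {x | t < 2 * |f x|} with hE
    have hEm : MeasurableSet E := measurableSet_lt measurable_const (by fun_prop)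
    have hsub : {x | ENNReal.ofReal t < M x} ⊆
        {x | ENNReal.ofReal (t / 2) < maxOp μ (homCopies (c +ᵥ D)) (E.indicator f) x} := by
      intro x hx
      simp only [Set.mem_ofPred_eq] at hx ⊢
      by_contra hcon
      push Not at hcon
      have h1 := maxOp_split μ (homCopies (c +ᵥ D)) f (E.indicator f) (a := t / 2) (by
        intro y
        by_cases hy : y ∈ E
        · rw [Set.indicator_of_mem hy]; linarith
        · rw [Set.indicator_of_notMem hy]
          simp only [hE, Set.mem_ofPred_eq, not_lt] at hy
          simp; linarith) (by positivity) x
      have h2 : M x ≤ ENNReal.ofReal (t / 2) + ENNReal.ofReal (t / 2) :=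
        h1.trans (by gcongr)
      rw [← ENNReal.ofReal_add (by positivity) (by positivity), add_halves] at h2
      exact absurd hx (not_lt.2 h2)
    refine (measure_mono hsub).trans ((weak_type hD h _ (by positivity)).trans ?_)
    have h3 : ∫⁻ x, ENNReal.ofReal |E.indicator f x| ∂μ = ν E := by
      rw [hν, withDensity_apply _ hEm, ← lintegral_indicator hEm]
      congr 1; ext x
      by_cases hx : x ∈ E <;> simp [hx]
    rw [h3, mul_comm, mul_div_assoc, mul_comm (ν E), ← ENNReal.ofReal_pow (by positivity),
      ← ENNReal.ofReal_div_of_pos (by positivity)]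
    apply le_of_eq; congr 2; field_simp
  -- truncation
  have htrunc : ∀ N : ℕ, ∫⁻ x, (min (M x) N) ^ p ∂μ ≤
      ENNReal.ofReal (p * (2 * δ ^ 3) * (p - 1)⁻¹ * 2 ^ (p - 1)) *
        ∫⁻ x, ENNReal.ofReal |f x| ^ p ∂μ := by
    intro N
    have hne : ∀ x, min (M x) N ≠ ⊤ := fun x => by simp
    have hgm : Measurable fun x => (min (M x) N).toReal := by fun_prop
    have e1 : ∫⁻ x, (min (M x) N) ^ p ∂μ =
        ∫⁻ x, ENNReal.ofReal ((min (M x) (N : ℝ≥0∞)).toReal ^ p) ∂μ := by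
      congr 1; ext x
      rw [← ENNReal.ofReal_rpow_of_nonneg ENNReal.toReal_nonneg (by linarith),
        ENNReal.ofReal_toReal (hne x)]
    rw [e1, lintegral_rpow_eq_lintegral_meas_lt_mul μ
      (Eventually.of_forall fun x => ENNReal.toReal_nonneg) hgm.aemeasurable (by linarith)]
    have e2 : ∫⁻ t in Set.Ioi (0:ℝ), ν {x | t < 2 * |f x|} * ENNReal.ofReal (t ^ (p - 1 - 1)) =
        ENNReal.ofReal ((p - 1)⁻¹) * ∫⁻ x, ENNReal.ofReal ((2 * |f x|) ^ (p - 1)) ∂ν := by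
      rw [lintegral_rpow_eq_lintegral_meas_lt_mul ν
        (Eventually.of_forall fun x => by positivity)
        (by fun_prop : Measurable fun x => 2 * |f x|).aemeasurable (by linarith : 0 < p - 1),
        ← mul_assoc, ← ENNReal.ofReal_mul (by simp; linarith),
        inv_mul_cancel₀ (by linarith), ENNReal.ofReal_one, one_mul]
    have e3 : ∫⁻ x, ENNReal.ofReal ((2 * |f x|) ^ (p - 1)) ∂ν =
        ENNReal.ofReal (2 ^ (p - 1)) * ∫⁻ x, ENNReal.ofReal |f x| ^ p ∂μ := by
      rw [hν, lintegral_withDensity_eq_lintegral_mul _ hfm (by fun_prop),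
        ← lintegral_const_mul _ (by fun_prop)]
      congr 1; ext x
      simp only [Pi.mul_apply]
      rw [ENNReal.ofReal_rpow_of_nonneg (abs_nonneg _) (by linarith),
        ← ENNReal.ofReal_mul (abs_nonneg _), ← ENNReal.ofReal_mul (by positivity),
        Real.mul_rpow (by norm_num) (abs_nonneg _)]
      congr 1
      rcases eq_or_lt_of_le (abs_nonneg (f x)) with h0 | h0
      · rw [← h0, Real.zero_rpow (by linarith)]; rw [Real.zero_rpow (by linarith : p ≠ 0)]; simp
      · rw [Real.rpow_sub_one h0.ne']; field_simp
    calc _ ≤ ENNReal.ofReal p * ∫⁻ t in Set.Ioi (0:ℝ), ENNReal.ofReal (2 * δ ^ 3) *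
          (ν {x | t < 2 * |f x|} * ENNReal.ofReal (t ^ (p - 1 - 1))) := by
          gcongr 1
          refine setLIntegral_mono' measurableSet_Ioi fun t ht => ?_
          have ht : 0 < t := ht
          have hsub : {a | t < (min (M a) (N : ℝ≥0∞)).toReal} ⊆ {x | ENNReal.ofReal t < M x} := by
            intro a ha
            exact ((ENNReal.ofReal_lt_iff_lt_toReal ht.le (hne a)).2 ha).trans_le (min_le_left _ _)
          calc _ ≤ (ENNReal.ofReal (2 * δ ^ 3 / t) * ν {x | t < 2 * |f x|}) *
                ENNReal.ofReal (t ^ (p - 1)) := by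
                gcongr; exact (measure_mono hsub).trans (hlev t ht)
            _ = (ENNReal.ofReal (2 * δ ^ 3 / t) * ENNReal.ofReal (t ^ (p - 1))) *
                ν {x | t < 2 * |f x|} := by ring
            _ = (ENNReal.ofReal (2 * δ ^ 3) * ENNReal.ofReal (t ^ (p - 1 - 1))) *
                ν {x | t < 2 * |f x|} := by
                rw [← ENNReal.ofReal_mul (by positivity), ← ENNReal.ofReal_mul (by positivity),
                  Real.rpow_sub_one ht.ne' (p - 1)]
                congr 2; field_simp
            _ = _ := by ring
      _ = _ := by
          rw [lintegral_const_mul' _ _ ENNReal.ofReal_ne_top, e2, e3]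
          have hp1 : 0 < p - 1 := by linarith
          have hδ3 : 0 ≤ 2 * δ ^ 3 := by positivity
          have hp0 : 0 ≤ p := by linarith
          have hi : 0 ≤ (p - 1)⁻¹ := by positivity
          rw [ENNReal.ofReal_mul (mul_nonneg (mul_nonneg hp0 hδ3) hi),
            ENNReal.ofReal_mul (mul_nonneg hp0 hδ3), ENNReal.ofReal_mul hp0]
          ring
  have hsup : ∀ x, M x ^ p = ⨆ N : ℕ, (min (M x) N) ^ p := by
    intro x
    have hmono : Monotone fun N : ℕ => (min (M x) (N : ℝ≥0∞)) ^ p := by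
      intro a b hab
      dsimp only
      gcongr
    have ht : Tendsto (fun N : ℕ => (min (M x) (N : ℝ≥0∞)) ^ p) atTop (𝓝 (M x ^ p)) := by
      have h1 : Tendsto (fun N : ℕ => min (M x) (N : ℝ≥0∞)) atTop (𝓝 (min (M x) ⊤)) :=
        tendsto_const_nhds.min ENNReal.tendsto_nat_nhds_top
      rw [min_eq_left le_top] at h1
      exact (ENNReal.continuous_rpow_const.tendsto _).comp h1
    exact tendsto_nhds_unique ht (tendsto_atTop_iSup hmono)
  calc ∫⁻ x, M x ^ p ∂μ = ∫⁻ x, ⨆ N : ℕ, (min (M x) N) ^ p ∂μ := by simp_rw [← hsup]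
    _ = ⨆ N : ℕ, ∫⁻ x, (min (M x) N) ^ p ∂μ := by
      refine lintegral_iSup (fun N => by fun_prop) ?_
      intro a b hab x
      dsimp only
      gcongr
    _ ≤ _ := iSup_le htrunc

end Helpers12

/-- Proposition `p.noboundarymass` (iii) of the paper. For measures
doubling with constant `δ` with respect to the family of homothetic copies of a fixed
rectangle, the maximal operator `M_{𝔎,μ}` is of weak type `(1,1)` and bounded on
`L^p(μ)` for every `1 < p`, with constants depending only on `δ`, `n` and `p` (hence
chosen uniformly before the measure and the rectangle). -/
theorem statement12 (n : ℕ) (δ : ℝ) (hδ : 1 < δ) :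
    (∃ C : ℝ, 0 < C ∧
      ∀ R₀ : Set (EuclideanSpace ℝ (Fin n)), IsRect R₀ →
      ∀ μ : Measure (EuclideanSpace ℝ (Fin n)), IsLocallyFiniteMeasure μ → μ ≠ 0 →
        DoublingWrt μ (homCopies R₀) δ →
        ∀ f : EuclideanSpace ℝ (Fin n) → ℝ, Integrable f μ → ∀ lam : ℝ, 0 < lam →
          μ {x | ENNReal.ofReal lam < maxOp μ (homCopies R₀) f x}
            ≤ ENNReal.ofReal C * (∫⁻ x, ENNReal.ofReal |f x| ∂μ) / ENNReal.ofReal lam) ∧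
    (∀ p : ℝ, 1 < p → ∃ C : ℝ, 0 < C ∧
      ∀ R₀ : Set (EuclideanSpace ℝ (Fin n)), IsRect R₀ →
      ∀ μ : Measure (EuclideanSpace ℝ (Fin n)), IsLocallyFiniteMeasure μ → μ ≠ 0 →
        DoublingWrt μ (homCopies R₀) δ →
        ∀ f : EuclideanSpace ℝ (Fin n) → ℝ, Measurable f →
          ∫⁻ x, maxOp μ (homCopies R₀) f x ^ p ∂μ
            ≤ ENNReal.ofReal (C ^ p) * ∫⁻ x, ENNReal.ofReal |f x| ^ p ∂μ) := by
  constructor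
  · refine ⟨δ ^ 3, by positivity, ?_⟩
    intro R₀ hR μ hμ _ hdoub f _ lam hlam
    obtain ⟨c, D, hD, rfl⟩ := isRect_symBody hR
    rw [ENNReal.ofReal_pow (by positivity)]
    exact weak_type hD hdoub f hlam
  · intro p hp
    have hp1 : 0 < p - 1 := by linarith
    have hK : 0 < p * (2 * δ ^ 3) * (p - 1)⁻¹ * 2 ^ (p - 1) := by positivity
    refine ⟨(p * (2 * δ ^ 3) * (p - 1)⁻¹ * 2 ^ (p - 1)) ^ p⁻¹, by positivity, ?_⟩
    intro R₀ hR μ hμ _ hdoub f hf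
    obtain ⟨c, D, hD, rfl⟩ := isRect_symBody hR
    rw [Real.rpow_inv_rpow hK.le (by linarith)]
    exact strong_type hD hδ hdoub f hf hp
end

section
/- Let 𝔅 be a homothecy invariant basis of nonempty bounded open convex subsets of ℝⁿ, with associated homothecy invariant rectangle basis 𝔊 = {R_B : B ∈ 𝔅} satisfying B ⊆ R_B ⊆ h_B(B) for a homothety h_B of ratio n^{3/2} centered at a point of B. Let μ, ν be locally finite nonnegative Borel measures with μ nonzero and doubling with respect to 𝔅. If M_{𝔅,μ} satisfies the Tauberian condition at some level γ ∈ (0,1) with respect to ν (i.e. ν({M_{𝔅,μ}(1_E) > γ}) ≤ c·ν(E) for all Borel E and some c > 0), then for every α ∈ (γ,1) there exists c' > 0 such that ν({x ∈ ℝⁿ : M_{𝔊,μ}(1_E)(x) > α}) ≤ c'·ν(E) for every Borel set E. -/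
open MeasureTheory Set Filter
open scoped ENNReal Topology Pointwise

abbrev Vn (n : ℕ) := EuclideanSpace ℝ (Fin n)

section aux
variable {n : ℕ}

/-- homothetic copy -/
def hb (x : Vn n) (r : ℝ) (K : Set (Vn n)) : Set (Vn n) := {y | y - x ∈ r • K}

theorem mem_hb {x y : Vn n} {r : ℝ} {K : Set (Vn n)} : y ∈ hb x r K ↔ y - x ∈ r • K := Iff.rfl

theorem hb_eq (x : Vn n) (r : ℝ) (K : Set (Vn n)) : hb x r K = x +ᵥ r • K := by
  ext y
  rw [mem_hb, Set.mem_vadd_set_iff_neg_vadd_mem, vadd_eq_add, sub_eq_neg_add]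

theorem sc_add {K : Set (Vn n)} (hK : Convex ℝ K) {a b : ℝ} (ha : 0 ≤ a) (hb : 0 ≤ b)
    {u v : Vn n} (hu : u ∈ a • K) (hv : v ∈ b • K) : u + v ∈ (a + b) • K := by
  rw [hK.add_smul ha hb]
  exact Set.add_mem_add hu hv

theorem sc_mono {K : Set (Vn n)} (hK : Convex ℝ K) (h0 : (0 : Vn n) ∈ K) {a b : ℝ} (ha : 0 ≤ a)
    (hab : a ≤ b) {u : Vn n} (hu : u ∈ a • K) : u ∈ b • K := by
  have h : (0 : Vn n) ∈ (b - a) • K := ⟨0, h0, by simp⟩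
  have := sc_add hK ha (sub_nonneg.2 hab) hu h
  simpa using this

theorem sc_smul {K : Set (Vn n)} {a : ℝ} (l : ℝ) {u : Vn n} (hu : u ∈ a • K) :
    l • u ∈ (l * a) • K := by
  obtain ⟨k, hk, rfl⟩ := hu
  exact ⟨k, hk, by simp [mul_smul]⟩

theorem sc_neg {K L : Set (Vn n)} {C : ℝ} (hC : ∀ k ∈ K, -k ∈ C • L) {a : ℝ} {u : Vn n}
    (hu : u ∈ a • K) : -u ∈ (a * C) • L := by
  obtain ⟨k, hk, rfl⟩ := hu
  have := sc_smul a (hC k hk)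
  simpa using this

theorem sc_meas {K : Set (Vn n)} (hK : IsOpen K) {x : Vn n} {r : ℝ} (hr : 0 < r) :
    IsOpen (hb x r K) := by
  rw [hb_eq]
  exact (hK.smul₀ hr.ne').vadd x

theorem hb_bdd {K : Set (Vn n)} (hK : Bornology.IsBounded K) (x : Vn n) (r : ℝ) :
    Bornology.IsBounded (hb x r K) := by
  rw [hb_eq]
  exact (hK.smul₀ r).vadd x

theorem hb_fin {K : Set (Vn n)} (hK : Bornology.IsBounded K) (x : Vn n) (r : ℝ)
    (μ : Measure (Vn n)) [IsLocallyFiniteMeasure μ] : μ (hb x r K) ≠ ∞ :=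
  (hb_bdd hK x r).measure_lt_top.ne

theorem fub (μ : Measure (Vn n)) [SFinite μ] (A : Set (Vn n)) {W : Set (Vn n)}
    (hW : MeasurableSet W) :
    ∫⁻ x : Vn n, μ (A ∩ {y | y - x ∈ W}) = volume W * μ A := by
  have hm : Measurable (fun p : Vn n × Vn n => W.indicator (1 : Vn n → ℝ≥0∞) (p.2 - p.1)) :=
    (measurable_one.indicator hW).comp (measurable_snd.sub measurable_fst)
  have h1 : ∀ x : Vn n, μ (A ∩ {y | y - x ∈ W})
      = ∫⁻ y in A, W.indicator (1 : Vn n → ℝ≥0∞) (y - x) ∂μ := by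
    intro x
    have hS : MeasurableSet {y : Vn n | y - x ∈ W} := (measurable_id.sub_const x) hW
    have : (fun y => W.indicator (1 : Vn n → ℝ≥0∞) (y - x))
        = {y : Vn n | y - x ∈ W}.indicator 1 := by
      ext y; simp [Set.indicator]
    rw [this, lintegral_indicator_one hS, Measure.restrict_apply hS, inter_comm]
  simp_rw [h1]
  rw [lintegral_lintegral_swap hm.aemeasurable]
  have h2 : ∀ y : Vn n, ∫⁻ x : Vn n, W.indicator (1 : Vn n → ℝ≥0∞) (y - x) = volume W := by
    intro y
    rw [lintegral_sub_left_eq_self (fun x => W.indicator (1 : Vn n → ℝ≥0∞) x) y,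
      lintegral_indicator_one hW]
  simp_rw [h2]
  simp

theorem cov (g : Vn n → ℝ≥0∞) (x0 : Vn n) {l : ℝ} (hl : 1 ≤ l) :
    ∫⁻ x, g (x0 + l • (x - x0)) ≤ ∫⁻ x, g x := by
  have hl0 : l ≠ 0 := by positivity
  rw [lintegral_sub_right_eq_self (fun x => g (x0 + l • x)) x0,
    ← lintegral_add_left_eq_self g x0]
  have h := lintegral_map_equiv (μ := (volume : Measure (Vn n))) (fun x => g (x0 + x))
    (Homeomorph.smulOfNeZero l hl0).toMeasurableEquiv
  have h' : ∫⁻ x, g (x0 + l • x) = ∫⁻ x, g (x0 + x) ∂(Measure.map (l • ·) volume) := h.symm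
  rw [h', Measure.map_addHaar_smul _ hl0, lintegral_smul_measure]
  refine (mul_le_of_le_one_left (zero_le) ?_)
  rw [ENNReal.ofReal_le_one, abs_of_nonneg (by positivity)]
  exact inv_le_one_of_one_le₀ (one_le_pow₀ hl)


structure Good (μ : Measure (Vn n)) (K : Set (Vn n)) (C D : ℝ) : Prop where
  conv : Convex ℝ K
  op : IsOpen K
  bdd : Bornology.IsBounded K
  zero : (0 : Vn n) ∈ K
  neg : ∀ k ∈ K, -k ∈ C • K
  dbl : ∀ (x : Vn n) (r : ℝ), 0 < r → μ (hb x (2 * r) K) ≤ ENNReal.ofReal D * μ (hb x r K)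

theorem hb_smul (x : Vn n) (r s : ℝ) (K : Set (Vn n)) : hb x r (s • K) = hb x (r * s) K := by
  ext y; rw [mem_hb, mem_hb, smul_smul]

theorem hb_mono {K : Set (Vn n)} (hK : Convex ℝ K) (h0 : (0 : Vn n) ∈ K) {a b : ℝ} (ha : 0 ≤ a)
    (hab : a ≤ b) (x : Vn n) : hb x a K ⊆ hb x b K :=
  fun _ hy => sc_mono hK h0 ha hab hy

theorem Good.smul {μ : Measure (Vn n)} {K : Set (Vn n)} {C D : ℝ} (h : Good μ K C D) {s : ℝ}
    (hs : 0 < s) : Good μ (s • K) C D where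
  conv := h.conv.smul s
  op := h.op.smul₀ hs.ne'
  bdd := h.bdd.smul₀ s
  zero := ⟨0, h.zero, by simp⟩
  neg := by
    intro k hk
    rw [smul_smul, mul_comm]
    exact sc_neg h.neg hk
  dbl := by
    intro x r hr
    rw [hb_smul, hb_smul, mul_assoc]
    exact h.dbl x _ (by positivity)

theorem Good.dbl_pow {μ : Measure (Vn n)} {K : Set (Vn n)} {C D : ℝ} (h : Good μ K C D)
    (x : Vn n) {r : ℝ} (hr : 0 < r) (m : ℕ) :
    μ (hb x (2 ^ m * r) K) ≤ ENNReal.ofReal D ^ m * μ (hb x r K) := by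
  induction m with
  | zero => simp
  | succ m ih =>
    have := h.dbl x (2 ^ m * r) (by positivity)
    rw [pow_succ', mul_assoc, pow_succ', mul_assoc]
    exact this.trans (by gcongr)

theorem Good.step {μ : Measure (Vn n)} [SFinite μ] {K : Set (Vn n)} {C D : ℝ} (h : Good μ K C D)
    (hC : 1 ≤ C) (x0 : Vn n) {m : ℕ} (hm : 36 * C ^ 2 + 1 ≤ 2 ^ m) {r : ℝ} (hr : 0 < r)
    (hr1 : r ≤ 1) :
    μ (hb x0 (1 + r) K \ hb x0 1 K)
      ≤ ENNReal.ofReal D ^ m * μ (hb x0 (1 + 9 * r) K \ hb x0 (1 + r) K) := by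
  have hC0 : 0 < C := by linarith
  obtain ⟨a, ha⟩ : ∃ a, a = r / (4 * C) := ⟨_, rfl⟩
  have ha0 : 0 < a := by rw [ha]; positivity
  have haC : a * C = r / 4 := by rw [ha]; field_simp
  have har : a ≤ r / 4 := by nlinarith
  set W : Set (Vn n) := a • K with hW
  have hWo : IsOpen W := h.op.smul₀ ha0.ne'
  have hWn : W.Nonempty := ⟨0, 0, h.zero, by simp⟩
  have hWp : volume W ≠ 0 := (hWo.measure_pos volume hWn).ne'
  have hWf : volume W ≠ ∞ := (h.bdd.smul₀ a).measure_lt_top.ne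
  set T := hb x0 (1 + r) K \ hb x0 1 K with hT
  set L := hb x0 (1 + 9 * r) K \ hb x0 (1 + r) K with hL
  have hD : ENNReal.ofReal D ^ m ≠ ∞ := by finiteness
  have key : ∀ x : Vn n, μ (T ∩ {y | y - x ∈ W}) ≤
      ENNReal.ofReal D ^ m * μ (L ∩ {y | y - (x0 + (1 + 3 * r) • (x - x0)) ∈ W}) := by
    intro x
    rcases Set.eq_empty_or_nonempty (T ∩ {y | y - x ∈ W}) with he | ⟨t, ⟨ht1, ht2⟩, htx⟩
    · rw [he]; simp
    change t - x ∈ W at htx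
    rw [mem_hb] at ht1 ht2
    have hx1 : x - x0 ∈ (1 + r + r / 4) • K := by
      have h1 := sc_neg h.neg htx
      rw [haC] at h1
      have := sc_add h.conv (by positivity) (by positivity) ht1 h1
      convert this using 1
      abel
    have hx2 : x - x0 ∉ (1 - a) • K := by
      intro hx
      apply ht2
      have := sc_add h.conv (by linarith) ha0.le hx htx
      rw [show 1 - a + a = 1 by ring] at this
      convert this using 1
      abel
    have hsub : {y | y - (x0 + (1 + 3 * r) • (x - x0)) ∈ W} ⊆ L := by
      intro y hy
      change y - (x0 + (1 + 3 * r) • (x - x0)) ∈ W at hy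
      constructor
      · rw [mem_hb]
        have h1 := sc_add h.conv (by positivity) ha0.le (sc_smul (1 + 3 * r) hx1) hy
        refine sc_mono h.conv h.zero (by positivity) ?_ (b := 1 + 9 * r)
          (a := (1 + 3 * r) * (1 + r + r / 4) + a) ?_
        · nlinarith
        · convert h1 using 1
          abel
      · intro hy2
        rw [mem_hb] at hy2
        apply hx2
        have h1 := sc_neg h.neg hy
        rw [haC] at h1
        have h2 := sc_add h.conv (by positivity) (by positivity) hy2 h1
        have h3 := sc_smul (1 + 3 * r)⁻¹ h2
        refine sc_mono h.conv h.zero (a := (1 + 3 * r)⁻¹ * (1 + r + r / 4)) (by positivity) ?_ ?_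
        · rw [inv_mul_le_iff₀ (by positivity)]
          nlinarith
        · convert h3 using 1
          rw [eq_inv_smul_iff₀ (by positivity)]
          abel
    rw [inter_eq_right.2 hsub]
    have hcont : hb x a K ⊆ hb (x0 + (1 + 3 * r) • (x - x0)) (2 ^ m * a) K := by
      intro y hy
      rw [mem_hb] at hy ⊢
      have h1 := sc_neg h.neg (sc_smul (3 * r) hx1)
      have h2 := sc_add h.conv (by positivity) ha0.le h1 hy
      refine sc_mono h.conv h.zero (a := 3 * r * (1 + r + r / 4) * C + a) (by positivity) ?_ ?_
      · have hra : r = 4 * (a * C) := by linarith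
        have : 3 * r * (1 + r + r / 4) * C ≤ 36 * C ^ 2 * a := by
          have : 3 * r * (1 + r + r / 4) * C ≤ 9 * r * C := by
            have : r * (1 + r + r / 4) ≤ r * 3 := by gcongr; linarith
            nlinarith
          have h5 : 9 * r * C = 36 * C ^ 2 * a := by rw [hra]; ring
          linarith
        nlinarith
      · convert h2 using 1
        module
    calc μ (T ∩ {y | y - x ∈ W}) ≤ μ (hb x a K) := measure_mono inter_subset_right
      _ ≤ _ := measure_mono hcont
      _ ≤ _ := h.dbl_pow _ ha0 m
  have h1 := fub μ T hWo.measurableSet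
  have h2 := fub μ L hWo.measurableSet
  have h3 : volume W * μ T ≤ volume W * (ENNReal.ofReal D ^ m * μ L) := by
    rw [← h1]
    refine (lintegral_mono key).trans ?_
    rw [lintegral_const_mul' _ _ hD]
    have := cov (fun x => μ (L ∩ {y | y - x ∈ W})) x0 (l := 1 + 3 * r) (by linarith)
    rw [h2] at this
    calc _ ≤ ENNReal.ofReal D ^ m * (volume W * μ L) := by gcongr
      _ = _ := by ring
  exact (ENNReal.mul_le_mul_iff_right hWp hWf).1 h3

theorem annular (C D η : ℝ) (hC : 1 ≤ C) (hD : 1 ≤ D) (hη : 0 < η) :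
    ∃ ε : ℝ, 0 < ε ∧ ∀ (μ : Measure (Vn n)) [IsLocallyFiniteMeasure μ] (K : Set (Vn n)),
      Good μ K C D → ∀ (x : Vn n) (s : ℝ), 0 < s →
        μ (hb x ((1 + ε) * s) K) ≤ ENNReal.ofReal (1 + η) * μ (hb x s K) := by
  obtain ⟨m, hm⟩ := pow_unbounded_of_one_lt (36 * C ^ 2 + 1) (one_lt_two (α := ℝ))
  set G : ℝ := D ^ m with hG
  have hG1 : 1 ≤ G := one_le_pow₀ hD
  set q : ℝ := G / (1 + G) with hq
  have hq0 : 0 ≤ q := by positivity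
  have hq1 : q < 1 := by rw [hq, div_lt_one (by positivity)]; linarith
  obtain ⟨k, hk⟩ := exists_pow_lt_of_lt_one (show 0 < η / D by positivity) hq1
  refine ⟨(1 / 9) ^ k, by positivity, ?_⟩
  intro μ _ K0 h0 x s hs
  have h := h0.smul hs
  rw [← hb_smul, show hb x s K0 = hb x 1 (s • K0) by rw [hb_smul, one_mul]]
  generalize s • K0 = K at h
  set F : ℝ → ℝ := fun t => (μ (hb x t K)).toReal with hF
  have hFin : ∀ t, μ (hb x t K) ≠ ∞ := fun t => hb_fin h.bdd x t μ
  have hdiff : ∀ a b : ℝ, 0 < a → a ≤ b → μ (hb x b K \ hb x a K) = ENNReal.ofReal (F b - F a) := by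
    intro a b ha hab
    rw [measure_sdiff (hb_mono h.conv h.zero ha.le hab x)
      (sc_meas h.op ha).measurableSet.nullMeasurableSet (hFin a),
      ENNReal.ofReal_sub _ ENNReal.toReal_nonneg, ENNReal.ofReal_toReal (hFin a),
      ENNReal.ofReal_toReal (hFin b)]
  have hmono : ∀ a b : ℝ, 0 < a → a ≤ b → F a ≤ F b := fun a b ha hab =>
    ENNReal.toReal_mono (hFin b) (measure_mono (hb_mono h.conv h.zero ha.le hab x))
  have hstep : ∀ r : ℝ, 0 < r → r ≤ 1 → F (1 + r) - F 1 ≤ G * (F (1 + 9 * r) - F (1 + r)) := by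
    intro r hr hr1
    have := h.step hC x hm.le hr hr1
    rw [hdiff _ _ one_pos (by linarith), hdiff _ _ (by linarith) (by linarith),
      ← ENNReal.ofReal_pow (by linarith), ← ENNReal.ofReal_mul (by positivity)] at this
    refine (ENNReal.ofReal_le_ofReal_iff ?_).1 this
    have := hmono (1 + r) (1 + 9 * r) (by linarith) (by linarith)
    exact mul_nonneg (by positivity) (by linarith)
  have hd : F 2 ≤ D * F 1 := by
    have := h.dbl x 1 one_pos
    have h2 := ENNReal.toReal_mono (by finiteness [hFin 1]) this
    rw [ENNReal.toReal_mul, ENNReal.toReal_ofReal (by linarith)] at h2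
    simpa using h2
  have hF1 : 0 ≤ F 1 := ENNReal.toReal_nonneg
  have hind : ∀ j : ℕ, F (1 + (1 / 9) ^ j) - F 1 ≤ q ^ j * (D * F 1) := by
    intro j
    induction j with
    | zero => norm_num; linarith
    | succ j ih =>
      have h9 : 9 * ((1 : ℝ) / 9) ^ (j + 1) = (1 / 9) ^ j := by rw [pow_succ]; ring
      have := hstep ((1 / 9) ^ (j + 1)) (by positivity)
        (pow_le_one₀ (by positivity) (by norm_num))
      rw [h9] at this
      have h5 : F (1 + (1 / 9) ^ (j + 1)) - F 1 ≤ q * (F (1 + (1 / 9) ^ j) - F 1) := by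
        rw [hq, div_mul_eq_mul_div, le_div_iff₀ (by positivity)]
        linarith
      calc _ ≤ _ := h5
        _ ≤ q * (q ^ j * (D * F 1)) := by gcongr
        _ = _ := by ring
  have hfin : F (1 + (1 / 9) ^ k) ≤ (1 + η) * F 1 := by
    have h1 := hind k
    have h2 : q ^ k * (D * F 1) ≤ η / D * (D * F 1) := by gcongr
    have h3 : η / D * (D * F 1) = η * F 1 := by field_simp
    linarith
  rw [← ENNReal.ofReal_toReal (hFin (1 + (1 / 9) ^ k)), ← ENNReal.ofReal_toReal (hFin 1),
    ← ENNReal.ofReal_mul (by positivity)]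
  exact ENNReal.ofReal_le_ofReal hfin

theorem geom {B R : Set (Vn n)} (hB : Convex ℝ B) (hR : Convex ℝ R) (hBR : B ⊆ R) {z : Vn n}
    (hz : z ∈ B) {c : ℝ} (hc : 0 ≤ c) (hRB : R ⊆ (fun x => z + c • (x - z)) '' B)
    {w : Vn n} (hw : ∀ p ∈ R, (2 : ℝ) • w - p ∈ R) :
    ∃ w' ∈ B, ∀ p ∈ R, w' + (2 * (c + 1))⁻¹ • (p - w') ∈ B ∧
      w' - (2 * (c + 1))⁻¹ • (p - w') ∈ B := by
  have hc1 : c + 1 ≠ 0 := by positivity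
  have g : ∀ p ∈ R, z + (c + 1)⁻¹ • (p - z) ∈ B := by
    intro p hp
    obtain ⟨b, hb, rfl⟩ := hRB hp
    have := hB.add_smul_sub_mem hz hb (t := c / (c + 1))
      ⟨by positivity, by rw [div_le_one (by positivity)]; linarith⟩
    convert this using 1
    simp only [add_sub_cancel_left, smul_smul]
    congr 2
    field_simp
  have mid : ∀ p ∈ R, ∀ q ∈ R, (1 / 2 : ℝ) • p + (1 / 2 : ℝ) • q ∈ R := fun p hp q hq =>
    hR hp hq (by norm_num) (by norm_num) (by norm_num)
  have hwR : w ∈ R := by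
    have := mid z (hBR hz) _ (hw z (hBR hz))
    convert this using 1
    module
  set w' := z + (c + 1)⁻¹ • (w - z) with hw'
  have hw'B : w' ∈ B := g w hwR
  refine ⟨w', hw'B, fun p hp => ?_⟩
  have h2 : w + (1 / 2 : ℝ) • (p - w') ∈ R := by
    have := mid p hp _ (hw w' (hBR hw'B))
    convert this using 1
    module
  have h3 : w - (1 / 2 : ℝ) • (p - w') ∈ R := by
    have := hw _ h2
    convert this using 1
    module
  constructor
  · have := g _ h2
    convert this using 1
    rw [mul_inv]
    generalize p - w' = u
    rw [hw']
    module
  · have := g _ h3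
    convert this using 1
    rw [mul_inv]
    generalize p - w' = u
    rw [hw']
    module

theorem rect_props {R : Set (Vn n)} (h : IsRect R) :
    Convex ℝ R ∧ IsOpen R ∧ ∃ w : Vn n, ∀ p ∈ R, (2 : ℝ) • w - p ∈ R := by
  obtain ⟨f, S, ⟨a, b, hab, rfl⟩, rfl⟩ := h
  set S : Set (Vn n) := {x | ∀ i, x i ∈ Set.Ioo (a i) (b i)} with hS
  have hSe : S = (EuclideanSpace.equiv (Fin n) ℝ) ⁻¹' (Set.univ.pi fun i => Set.Ioo (a i) (b i)) := by
    ext x; simp [hS]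
  have hSo : IsOpen S := by
    rw [hSe]
    exact (isOpen_set_pi finite_univ fun i _ => isOpen_Ioo).preimage
      (EuclideanSpace.equiv (Fin n) ℝ).continuous
  have hSc : Convex ℝ S := by
    rw [hSe]
    exact (convex_pi fun i _ => convex_Ioo _ _).linear_preimage
      (EuclideanSpace.equiv (Fin n) ℝ).toLinearEquiv.toLinearMap
  have hf : ∀ x, f x = f.toRealAffineIsometryEquiv x := fun x => by simp
  have hfi : f '' S = f.toRealAffineIsometryEquiv.toAffineEquiv.toAffineMap '' S := by
    apply image_congr; intro x _; exact hf x
  refine ⟨?_, f.toHomeomorph.isOpenMap _ hSo, ?_⟩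
  · rw [hfi]; exact hSc.affine_image _
  · let m : Vn n := (WithLp.toLp 2 fun i => (a i + b i) / 2)
    refine ⟨f m, ?_⟩
    rintro _ ⟨x, hx, rfl⟩
    refine ⟨(2 : ℝ) • m - x, ?_, ?_⟩
    · intro i
      have := hx i
      simp only [m, PiLp.sub_apply, PiLp.smul_apply, smul_eq_mul, mem_Ioo] at this ⊢
      constructor <;> linarith [this.1, this.2]
    · have key : m = (1 / 2 : ℝ) • ((2 : ℝ) • m - x) + (1 / 2 : ℝ) • x := by module
      have h2 := congrArg f.toRealAffineIsometryEquiv.toAffineEquiv.toAffineMap key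
      rw [Convex.combo_affine_apply (by norm_num)] at h2
      change f m = (1 / 2 : ℝ) • f ((2 : ℝ) • m - x) + (1 / 2 : ℝ) • f x at h2
      rw [h2]
      module

theorem lint_ind (μ : Measure (Vn n)) {A : Set (Vn n)} (hA : MeasurableSet A) (B : Set (Vn n)) :
    ∫⁻ y in B, ENNReal.ofReal |A.indicator (1 : Vn n → ℝ) y| ∂μ = μ (A ∩ B) := by
  have : (fun y => ENNReal.ofReal |A.indicator (1 : Vn n → ℝ) y|) = A.indicator 1 := by
    ext y; by_cases hy : y ∈ A <;> simp [hy]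
  rw [this, lintegral_indicator_one hA, Measure.restrict_apply hA]

theorem lt_maxOp {μ : Measure (Vn n)} {𝔅 : Set (Set (Vn n))} {A : Set (Vn n)}
    (hA : MeasurableSet A) {t : ℝ≥0∞} {x : Vn n} :
    t < maxOp μ 𝔅 (A.indicator 1) x ↔ ∃ B ∈ 𝔅, x ∈ B ∧ 0 < μ B ∧ t < μ (A ∩ B) / μ B := by
  unfold maxOp
  simp only [lt_iSup_iff, lint_ind μ hA, exists_prop]

/-- halo with the set itself -/
def Hop (μ : Measure (Vn n)) (𝔅 : Set (Set (Vn n))) (γ : ℝ) (A : Set (Vn n)) : Set (Vn n) :=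
  A ∪ {x | ENNReal.ofReal γ < maxOp μ 𝔅 (A.indicator 1) x}

theorem Hop_meas {μ : Measure (Vn n)} {𝔅 : Set (Set (Vn n))} (hB : ∀ B ∈ 𝔅, IsOpen B) {γ : ℝ}
    {A : Set (Vn n)} (hA : MeasurableSet A) : MeasurableSet (Hop μ 𝔅 γ A) := by
  refine hA.union (IsOpen.measurableSet ?_)
  rw [isOpen_iff_mem_nhds]
  intro x hx
  obtain ⟨B, hBB, hxB, h⟩ := (lt_maxOp hA).1 hx
  filter_upwards [(hB B hBB).mem_nhds hxB] with y hy
  exact (lt_maxOp hA).2 ⟨B, hBB, hy, h⟩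

theorem Hop_iter {μ ν : Measure (Vn n)} {𝔅 : Set (Set (Vn n))} (hB : ∀ B ∈ 𝔅, IsOpen B) {γ c : ℝ}
    (hT : TauberianCond μ ν 𝔅 γ c) {A : Set (Vn n)} (hA : MeasurableSet A) (N : ℕ) :
    MeasurableSet ((Hop μ 𝔅 γ)^[N] A) ∧
      ν ((Hop μ 𝔅 γ)^[N] A) ≤ (1 + ENNReal.ofReal c) ^ N * ν A := by
  induction N with
  | zero => simpa using hA
  | succ N ih =>
    rw [Function.iterate_succ_apply']
    refine ⟨Hop_meas hB ih.1, ?_⟩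
    refine (measure_union_le _ _).trans ?_
    refine (add_le_add_right (hT _ ih.1) _).trans ?_
    rw [← one_add_mul, pow_succ', mul_assoc]
    exact mul_le_mul_right ih.2 _

theorem sub_Hop {μ : Measure (Vn n)} [IsLocallyFiniteMeasure μ] {𝔅 : Set (Set (Vn n))} {γ : ℝ}
    {A B : Set (Vn n)} (hA : MeasurableSet A) (hB : B ∈ 𝔅) (hfin : μ B ≠ ∞)
    (h : ENNReal.ofReal γ * μ B < μ (A ∩ B)) : B ⊆ Hop μ 𝔅 γ A := by
  intro x hx
  have hpos : 0 < μ B := lt_of_lt_of_le (lt_of_le_of_lt zero_le h) (measure_mono inter_subset_right)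
  refine Or.inr ((lt_maxOp hA).2 ⟨B, hB, hx, hpos, ?_⟩)
  rwa [ENNReal.lt_div_iff_mul_lt (Or.inl hpos.ne') (Or.inl hfin)]

theorem core (C D γ α : ℝ) (hC : 1 ≤ C) (hD : 1 ≤ D) (hγ : 0 < γ) (hγα : γ < α) (hα : α < 1) :
    ∃ N : ℕ, ∀ (μ : Measure (Vn n)) [IsLocallyFiniteMeasure μ] (𝔅 : Set (Set (Vn n)))
      (_ : ∀ B ∈ 𝔅, IsOpen B) (K Q : Set (Vn n)) (w : Vn n)
      (_ : Good μ K C D) (_ : Good μ Q C D) (_ : K ⊆ Q) (_ : Q ⊆ C • K)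
      (_ : ∀ (x : Vn n) (r : ℝ), 0 < r → hb x r K ∈ 𝔅) (E : Set (Vn n)) (_ : MeasurableSet E),
      ENNReal.ofReal α * μ (hb w 1 Q) < μ (E ∩ hb w 1 Q) →
        hb w 1 Q ⊆ (Hop μ 𝔅 γ)^[N] E := by
  obtain ⟨ε, hε, han⟩ := annular (n := n) C D (α / γ - 1) hC hD
    (by rw [sub_pos, one_lt_div hγ]; exact hγα)
  rw [add_sub_cancel] at han
  have hC0 : 0 < C := by linarith
  set δ := ε / (C + 1) with hδ
  have hδ0 : 0 < δ := by positivity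
  have hδε : δ * (C + 1) = ε := by rw [hδ]; field_simp
  obtain ⟨N, hN⟩ := pow_unbounded_of_one_lt ((C + (C + δ * C) * C) / δ) (show 1 < 1 + ε by linarith)
  rw [div_lt_iff₀ hδ0] at hN
  refine ⟨N + 1, ?_⟩
  intro μ _ 𝔅 hBo K Q w hK hQ hKQ hQK hhb E hE hμE
  have hγα' : ENNReal.ofReal γ * ENNReal.ofReal (α / γ) = ENNReal.ofReal α := by
    rw [← ENNReal.ofReal_mul hγ.le]; congr 1; field_simp
  -- step 1
  obtain ⟨x, y, hyQ, hyx, hx⟩ : ∃ x y : Vn n, y ∈ hb w 1 Q ∧ y ∈ hb x δ K ∧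
      ENNReal.ofReal γ * μ (hb x δ K) < μ (E ∩ hb x δ K) := by
    by_contra! hcon
    set W : Set (Vn n) := δ • K with hW
    have hWo : IsOpen W := hK.op.smul₀ hδ0.ne'
    have hWn : W.Nonempty := ⟨0, 0, hK.zero, by simp⟩
    have hWp : volume W ≠ 0 := (hWo.measure_pos volume hWn).ne'
    have hWf : volume W ≠ ∞ := (hK.bdd.smul₀ δ).measure_lt_top.ne
    have key : ∀ x : Vn n, μ ((E ∩ hb w 1 Q) ∩ {y | y - x ∈ W}) ≤
        ENNReal.ofReal γ * μ (hb w (1 + ε) Q ∩ {y | y - x ∈ W}) := by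
      intro x
      rcases Set.eq_empty_or_nonempty ((E ∩ hb w 1 Q) ∩ {y | y - x ∈ W}) with
        he | ⟨t, ⟨_, ht⟩, htx⟩
      · rw [he]; simp
      change t - x ∈ W at htx
      have hsub : {y | y - x ∈ W} ⊆ hb w (1 + ε) Q := by
        intro y hy
        change y - x ∈ W at hy
        rw [mem_hb] at ht ⊢
        have hm : ∀ a : ℝ, a • K ⊆ a • Q := fun a => Set.smul_set_mono hKQ
        have h1 := sc_neg hQ.neg (hm _ htx)
        have h2 := sc_add hQ.conv (by positivity) hδ0.le h1 (hm _ hy)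
        have h3 := sc_add hQ.conv zero_le_one (by positivity) ht h2
        rw [show 1 + (δ * C + δ) = 1 + ε by rw [← hδε]; ring] at h3
        convert h3 using 1
        abel
      rw [inter_eq_right.2 hsub]
      refine le_trans (measure_mono ?_) (hcon x t ht htx)
      exact inter_subset_inter_left _ inter_subset_left
    have h1 := fub μ (E ∩ hb w 1 Q) hWo.measurableSet
    have h2 := fub μ (hb w (1 + ε) Q) hWo.measurableSet
    have h3 : volume W * μ (E ∩ hb w 1 Q) ≤ volume W * (ENNReal.ofReal γ * μ (hb w (1 + ε) Q)) := by
      rw [← h1]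
      refine (lintegral_mono key).trans ?_
      rw [lintegral_const_mul' _ _ ENNReal.ofReal_ne_top, h2]
      exact le_of_eq (by ring)
    have h4 := (ENNReal.mul_le_mul_iff_right hWp hWf).1 h3
    have h5 := han μ Q hQ w 1 one_pos
    rw [mul_one] at h5
    have h6 : ENNReal.ofReal γ * μ (hb w (1 + ε) Q) ≤ ENNReal.ofReal α * μ (hb w 1 Q) := by
      rw [← hγα', mul_assoc]
      gcongr
    exact absurd (h4.trans h6) (not_le.2 hμE)
  have hmeas : ∀ j, MeasurableSet ((Hop μ 𝔅 γ)^[j] E) := by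
    intro j
    induction j with
    | zero => simpa using hE
    | succ j ih => rw [Function.iterate_succ_apply']; exact Hop_meas hBo ih
  have hpos : 0 < μ (hb x δ K) :=
    lt_of_lt_of_le (lt_of_le_of_lt zero_le hx) (measure_mono inter_subset_right)
  have hgrow : ∀ j : ℕ, hb x ((1 + ε) ^ j * δ) K ⊆ (Hop μ 𝔅 γ)^[j + 1] E := by
    intro j
    induction j with
    | zero =>
      simp only [pow_zero, one_mul, zero_add, Function.iterate_one]
      exact sub_Hop hE (hhb x δ hδ0) (hb_fin hK.bdd _ _ _) hx
    | succ j ih =>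
      rw [Function.iterate_succ_apply']
      have hr : 0 < (1 + ε) ^ j * δ := by positivity
      have hsub : hb x ((1 + ε) ^ j * δ) K ⊆ hb x ((1 + ε) ^ (j + 1) * δ) K := by
        apply hb_mono hK.conv hK.zero hr.le
        rw [pow_succ']
        nlinarith
      have hp : 0 < μ (hb x ((1 + ε) ^ j * δ) K) := by
        refine lt_of_lt_of_le hpos (measure_mono (hb_mono hK.conv hK.zero hδ0.le ?_ x))
        exact le_mul_of_one_le_left hδ0.le (one_le_pow₀ (by linarith))
      refine sub_Hop (hmeas _) (hhb x _ (by positivity)) (hb_fin hK.bdd _ _ _) ?_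
      have h1 := han μ K hK x _ hr
      rw [← mul_assoc, ← pow_succ'] at h1
      calc ENNReal.ofReal γ * μ (hb x ((1 + ε) ^ (j + 1) * δ) K)
          ≤ ENNReal.ofReal γ * (ENNReal.ofReal (α / γ) * μ (hb x ((1 + ε) ^ j * δ) K)) := by
            gcongr
        _ = ENNReal.ofReal α * μ (hb x ((1 + ε) ^ j * δ) K) := by rw [← mul_assoc, hγα']
        _ < 1 * μ (hb x ((1 + ε) ^ j * δ) K) := by
            rw [ENNReal.mul_lt_mul_iff_left hp.ne' (hb_fin hK.bdd _ _ _)]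
            rw [ENNReal.ofReal_lt_one]
            exact hα
        _ ≤ _ := by
            rw [one_mul]
            exact measure_mono (subset_inter ih hsub)
  refine Subset.trans ?_ (hgrow N)
  intro p hp
  rw [mem_hb, one_smul] at hp hyQ
  rw [mem_hb] at hyx ⊢
  have h1 : x - w ∈ (C + δ * C) • K := by
    have := sc_add hK.conv hC0.le (by positivity) (hQK hyQ) (sc_neg hK.neg hyx)
    convert this using 1
    abel
  have h2 := sc_add hK.conv hC0.le (by positivity) (hQK hp) (sc_neg hK.neg h1)
  refine sc_mono hK.conv hK.zero (by positivity) hN.le ?_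
  convert h2 using 1
  abel

end aux

/-- Lemma `l.taubassoc` of the paper. Under the associated-rectangle
setup, if `M_{𝔅,μ}` satisfies the Tauberian condition at some level `γ ∈ (0,1)` with
respect to `ν`, then for every `α ∈ (γ,1)` the operator `M_{𝔊,μ}` (over the associated
rectangles `𝔊 = Rect '' 𝔅`) satisfies a Tauberian condition at level `α` with respect
to `ν`. -/
theorem statement17 (n : ℕ) (𝔅 : Set (Set (EuclideanSpace ℝ (Fin n))))
    (hB : ∀ B ∈ 𝔅, IsConvexBasisSet B) (hhom : HomothecyInvariant 𝔅)
    (Rect : Set (EuclideanSpace ℝ (Fin n)) → Set (EuclideanSpace ℝ (Fin n)))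
    (hRect : ∀ B ∈ 𝔅, IsRect (Rect B) ∧ B ⊆ Rect B ∧
      ∃ z ∈ B, Rect B ⊆ (fun x => z + ((n : ℝ) ^ (3 / 2 : ℝ)) • (x - z)) '' B)
    (hGhom : HomothecyInvariant (Rect '' 𝔅))
    (μ ν : Measure (EuclideanSpace ℝ (Fin n)))
    (hlocμ : IsLocallyFiniteMeasure μ) (hlocν : IsLocallyFiniteMeasure ν)
    (hμ : μ ≠ 0) (hdbl : ∃ Δ : ℝ, 1 < Δ ∧ DoublingWrt μ 𝔅 Δ)
    (γ : ℝ) (hγ : γ ∈ Set.Ioo (0 : ℝ) 1)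
    (htaub : ∃ c : ℝ, 0 < c ∧ TauberianCond μ ν 𝔅 γ c) :
    ∀ α ∈ Set.Ioo γ 1, ∃ c' : ℝ, 0 < c' ∧ TauberianCond μ ν (Rect '' 𝔅) α c' := by
  classical
  intro α hα
  obtain ⟨Δ, hΔ, hdb⟩ := hdbl
  obtain ⟨c, hc, hT⟩ := htaub
  set c0 : ℝ := (n : ℝ) ^ (3 / 2 : ℝ) with hc0
  have hc0' : 0 ≤ c0 := by positivity
  set C : ℝ := 2 * (c0 + 1) with hCdef
  have hC : 1 ≤ C := by rw [hCdef]; linarith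
  have hCp : 0 < C := by linarith
  obtain ⟨m, hm⟩ := pow_unbounded_of_one_lt (2 * C) (one_lt_two (α := ℝ))
  have hD : (1 : ℝ) ≤ Δ ^ (m + 1) := one_le_pow₀ hΔ.le
  obtain ⟨N, hN⟩ := core (n := n) C (Δ ^ (m + 1)) γ α hC hD hγ.1 hα.1 hα.2
  have hBo : ∀ B ∈ 𝔅, IsOpen B := fun B h => (hB B h).2.2.1
  refine ⟨(1 + c) ^ N, by positivity, ?_⟩
  intro E hE
  have hgoal := (Hop_iter hBo hT hE N).2
  rw [show (1 + ENNReal.ofReal c) ^ N = ENNReal.ofReal ((1 + c) ^ N) by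
    rw [ENNReal.ofReal_pow (by positivity), ENNReal.ofReal_add zero_le_one hc.le,
      ENNReal.ofReal_one]] at hgoal
  refine le_trans (measure_mono ?_) hgoal
  intro x hx
  obtain ⟨R, ⟨B, hBB, rfl⟩, hxR, hRpos, hlt⟩ := (lt_maxOp hE).1 hx
  obtain ⟨hBne, hBbd, hBop, hBcv⟩ := hB B hBB
  obtain ⟨hRect1, hBR, z, hz, hRz⟩ := hRect B hBB
  obtain ⟨hRcv, hRop, w, hw⟩ := rect_props hRect1
  obtain ⟨w', hw'B, hw'⟩ := geom hBcv hRcv hBR hz hc0' hRz hw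
  rw [← hCdef] at hw'
  set K : Set (Vn n) := -w' +ᵥ B with hK
  set Q : Set (Vn n) := -w' +ᵥ Rect B with hQ
  have memK : ∀ u, u ∈ K ↔ w' + u ∈ B := by
    intro u; rw [hK, Set.mem_vadd_set_iff_neg_vadd_mem, neg_neg, vadd_eq_add]
  have memQ : ∀ u, u ∈ Q ↔ w' + u ∈ Rect B := by
    intro u; rw [hQ, Set.mem_vadd_set_iff_neg_vadd_mem, neg_neg, vadd_eq_add]
  have hKQ : K ⊆ Q := fun u hu => (memQ u).2 (hBR ((memK u).1 hu))
  have hQK : Q ⊆ C • K := by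
    intro u hu
    rw [Set.mem_smul_set_iff_inv_smul_mem₀ hCp.ne', memK]
    have := (hw' _ ((memQ u).1 hu)).1
    rwa [add_sub_cancel_left] at this
  have hQn : ∀ u ∈ Q, -u ∈ C • K := by
    intro u hu
    rw [Set.mem_smul_set_iff_inv_smul_mem₀ hCp.ne', memK]
    have := (hw' _ ((memQ u).1 hu)).2
    rwa [add_sub_cancel_left, sub_eq_add_neg, ← smul_neg] at this
  have hK0 : (0 : Vn n) ∈ K := by rw [memK, add_zero]; exact hw'B
  have hKc : Convex ℝ K := hBcv.vadd _
  have hKb : Bornology.IsBounded K := hBbd.vadd _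
  have hhb : ∀ (x : Vn n) (r : ℝ), 0 < r → hb x r K ∈ 𝔅 := by
    intro x r hr
    rw [hb_eq]
    exact (hhom _ ((hhom _ ((hhom B hBB).1 (-w'))).2 r hr)).1 x
  have hdb1 : ∀ (x : Vn n) (r : ℝ), 0 < r →
      μ (hb x (2 * r) K) ≤ ENNReal.ofReal Δ * μ (hb x r K) := by
    intro x r hr
    have he : (-x) +ᵥ (2 : ℝ) • hb x r K = hb x (2 * r) K := by
      ext y
      rw [Set.mem_vadd_set_iff_neg_vadd_mem, Set.mem_smul_set_iff_inv_smul_mem₀ two_ne_zero,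
        mem_hb, mem_hb, mul_smul, Set.mem_smul_set_iff_inv_smul_mem₀ (two_ne_zero (α := ℝ)),
        neg_neg, vadd_eq_add]
      have : (2 : ℝ)⁻¹ • (x + y) - x = (2 : ℝ)⁻¹ • (y - x) := by module
      rw [this]
    have := hdb _ (hhb x r hr) (-x) (by
      rw [he]; exact hb_mono hKc hK0 hr.le (by linarith) x)
    rwa [he] at this
  have gK1 : Good μ K C Δ := ⟨hKc, hBop.vadd _, hKb, hK0, fun k hk => hQn k (hKQ hk), hdb1⟩
  have hle : Δ ≤ Δ ^ (m + 1) := le_self_pow₀ hΔ.le (Nat.succ_ne_zero m)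
  have gK : Good μ K C (Δ ^ (m + 1)) := { gK1 with
    dbl := fun x r hr => (hdb1 x r hr).trans (by gcongr) }
  have gQ : Good μ Q C (Δ ^ (m + 1)) := by
    refine ⟨hRcv.vadd _, hRop.vadd _, (hKb.smul₀ C).subset hQK, hKQ hK0,
      fun k hk => Set.smul_set_mono hKQ (hQn k hk), ?_⟩
    intro x r hr
    have h1 : hb x (2 * r) Q ⊆ hb x (2 ^ m * r) K := by
      intro y hy
      rw [mem_hb] at hy ⊢
      obtain ⟨q, hq, hqe⟩ := hy
      have := sc_smul (2 * r) (hQK hq)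
      rw [← hqe]
      refine sc_mono hKc hK0 (by positivity) ?_ this
      nlinarith
    calc μ (hb x (2 * r) Q) ≤ μ (hb x (2 ^ m * r) K) := measure_mono h1
      _ ≤ ENNReal.ofReal Δ ^ m * μ (hb x r K) := gK1.dbl_pow x hr m
      _ ≤ ENNReal.ofReal (Δ ^ (m + 1)) * μ (hb x r Q) := by
        rw [← ENNReal.ofReal_pow (by linarith)]
        gcongr
        · exact hΔ.le
        · exact Nat.le_succ m
        · exact fun y hy => Set.smul_set_mono hKQ hy
  have hRe : hb w' 1 Q = Rect B := by
    ext y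
    rw [mem_hb, one_smul, memQ, add_sub_cancel]
  have hfinR : μ (Rect B) ≠ ∞ := by rw [← hRe]; exact hb_fin gQ.bdd _ _ _
  refine hN μ 𝔅 hBo K Q w' gK gQ hKQ hQK hhb E hE ?_ ?_
  · rw [hRe]
    rwa [ENNReal.lt_div_iff_mul_lt (Or.inl hRpos.ne') (Or.inl hfinR)] at hlt
  · rw [hRe]; exact hxR
end
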